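/- arXiv:1504.00173 — 2 statements merged into one kernel-verified Lean document; each statement's English description precedes it below -/
import Mathlib

section
/- In a 3-connected finite planar graph, if C is a cycle that is induced and non-separating, then in every planar embedding C bounds a face. -/
open SimpleGraph

/-- A topological embedding of a graph `G` in the plane: vertices are points, edges are
arcs meeting only at common endpoints and avoiding other vertices. -/
structure PlanarEmbedding {V : Type*} (G : SimpleGraph V) where
  vpos : V → ℝ × ℝ
  vinj : Function.Injective vpos
  arc : ∀ ⦃u v : V⦄, G.Adj u v → Set (ℝ × ℝ)
  arc_isArc : ∀ ⦃u v : V⦄ (h : G.Adj u v),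
    ∃ f : Path (vpos u) (vpos v), Function.Injective f ∧ Set.range f = arc h
  arc_symm : ∀ ⦃u v : V⦄ (h : G.Adj u v), arc h.symm = arc h
  arc_inter : ∀ ⦃u v u' v' : V⦄ (h : G.Adj u v) (h' : G.Adj u' v'),
    s(u, v) ≠ s(u', v') → arc h ∩ arc h' ⊆ vpos '' (({u, v} : Set V) ∩ {u', v'})
  arc_vertex : ∀ ⦃u v : V⦄ (h : G.Adj u v) (w : V), vpos w ∈ arc h → w = u ∨ w = v

/-- The point set of the embedded graph. -/
def PlanarEmbedding.image {V : Type*} {G : SimpleGraph V} (emb : PlanarEmbedding G) :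
    Set (ℝ × ℝ) :=
  Set.range emb.vpos ∪ ⋃ (u : V) (v : V) (h : G.Adj u v), emb.arc h

/-- A face of the embedding: a connected component of the complement of the image. -/
def PlanarEmbedding.IsFace {V : Type*} {G : SimpleGraph V} (emb : PlanarEmbedding G)
    (F : Set (ℝ × ℝ)) : Prop :=
  ∃ x ∈ emb.imageᶜ, F = connectedComponentIn emb.imageᶜ x

/-- The boundary of a face: the set of edges whose arcs lie in the closure of the face. -/
def PlanarEmbedding.boundaryEdges {V : Type*} {G : SimpleGraph V} (emb : PlanarEmbedding G)
    (F : Set (ℝ × ℝ)) : Set (Sym2 V) :=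
  {e | ∃ (u v : V) (h : G.Adj u v), e = s(u, v) ∧ emb.arc h ⊆ closure F}

/-- A peripheral cycle: a cycle that is induced (chordless) and non-separating. -/
def IsPeripheral {V : Type*} (G : SimpleGraph V) {v : V} (w : G.Walk v v) : Prop :=
  w.IsCycle ∧ (∀ a ∈ w.support, ∀ b ∈ w.support, G.Adj a b → s(a, b) ∈ w.edges) ∧
    ({x | x ∉ w.support} = (∅ : Set V) ∨ (G.induce {x | x ∉ w.support}).Connected)

/-- A 3-connected graph: more than 3 vertices, and removing any at most 2 vertices leaves
it connected. -/
def ThreeConnected {V : Type*} (G : SimpleGraph V) : Prop :=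
  (3 < Nat.card V ∨ Infinite V) ∧
    ∀ s : Set V, s.Finite → s.ncard ≤ 2 → (G.induce sᶜ).Connected

/-- A locally finite graph has exactly one end. -/
def OneEnded {V : Type*} (G : SimpleGraph V) : Prop :=
  ∀ K : Finset V, ∃! C : G.ComponentCompl (K : Set V), C.supp.Infinite

/-!
Let `J` be the curve drawn by the cycle. Two facts about plane separation, both obtained from
continuous complex logarithms, replace the Jordan curve theorem. The complement of `J` is
disconnected, because the circle has nonzero winding number about its centre. A broken arc does not
separate the plane, because every nonvanishing function on it has a logarithm; hence every component
of the complement of `J` has all of `J` in its closure.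

Since the cycle is induced, what the embedding draws off `J` is the union of the stars, cut along
`J`, of the remaining vertices, and this is connected because the cycle does not separate the graph.
So it meets at most one component of the complement of `J`; any other component is a face, and the
edges in its closure are exactly those of the cycle.
-/

open Set Metric
open scoped unitInterval

section ContinuousLog

variable {X Y : Type*} [TopologicalSpace X] [TopologicalSpace Y]

/-- `L` is a continuous branch of `log φ` on the set `K`. Values of `L` off `K` carry no meaning. -/
def IsLogBranchOn (L φ : X → ℂ) (K : Set X) : Prop :=
  ContinuousOn L K ∧ ∀ z ∈ K, Complex.exp (L z) = φ z

/-- Every nonvanishing continuous complex function on `K` has a continuous logarithm; for compact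
plane sets this is the analytic form of not separating the plane. -/
def HasContinuousLog (K : Set X) : Prop :=
  ∀ φ : X → ℂ, ContinuousOn φ K → (∀ z ∈ K, φ z ≠ 0) → ∃ L, IsLogBranchOn L φ K

namespace IsLogBranchOn

variable {L M φ ψ : X → ℂ} {A B K : Set X}

theorem mono (hL : IsLogBranchOn L φ B) (hAB : A ⊆ B) : IsLogBranchOn L φ A :=
  ⟨hL.1.mono hAB, fun z hz => hL.2 z (hAB hz)⟩

theorem congr (hL : IsLogBranchOn L φ K) (h : EqOn φ ψ K) : IsLogBranchOn L ψ K :=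
  ⟨hL.1, fun z hz => (hL.2 z hz).trans (h hz)⟩

theorem sub (hL : IsLogBranchOn L φ K) (hM : IsLogBranchOn M ψ K) :
    IsLogBranchOn (L - M) (φ / ψ) K :=
  ⟨hL.1.sub hM.1, fun z hz => by
    rw [Pi.sub_apply, Complex.exp_sub, hL.2 z hz, hM.2 z hz, Pi.div_apply]⟩

theorem exists_glue (hL : IsLogBranchOn L φ A) (hM : IsLogBranchOn M φ B)
    (hAB : IsPreconnected (A ∩ B)) : ∃ N, IsLogBranchOn N φ A ∧ IsLogBranchOn N φ B := by
  classical
  obtain ⟨c, hc, hLM⟩ : ∃ c, Complex.exp c = 1 ∧ EqOn L (fun z => M z + c) (A ∩ B) := by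
    rcases (A ∩ B).eq_empty_or_nonempty with hempty | ⟨a, ha⟩
    · exact ⟨0, Complex.exp_zero, by simp [hempty]⟩
    have hc : Complex.exp (L a - M a) = 1 := by
      rw [Complex.exp_sub, hL.2 a ha.1, ← hM.2 a ha.2, div_self (Complex.exp_ne_zero _)]
    refine ⟨L a - M a, hc, Complex.isCoveringMap_exp.eqOn_of_comp_eqOn hAB
      (hL.1.mono inter_subset_left) ((hM.1.mono inter_subset_right).add continuousOn_const)
      (fun z hz => Subtype.ext ?_) ha (by ring)⟩
    simp only [Function.comp_apply, Complex.exp_add, hc, hL.2 z hz.1, hM.2 z hz.2, mul_one]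
  have hNB : EqOn (A.piecewise L fun z => M z + c) (fun z => M z + c) B := fun z hz => by
    by_cases hzA : z ∈ A
    · rw [piecewise_eq_of_mem _ _ _ hzA, hLM ⟨hzA, hz⟩]
    · rw [piecewise_eq_of_notMem _ _ _ hzA]
  refine ⟨A.piecewise L fun z => M z + c,
    ⟨hL.1.congr (piecewise_eqOn _ _ _), fun z hz => ?_⟩,
    ⟨(hM.1.add continuousOn_const).congr hNB, fun z hz => ?_⟩⟩
  · rw [piecewise_eq_of_mem _ _ _ hz, hL.2 z hz]
  · rw [hNB hz, Complex.exp_add, hc, mul_one, hM.2 z hz]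

theorem exists_of_homotopy {H : I × K → ℂ} (hH : Continuous H) (hH0 : ∀ x, H x ≠ 0)
    {ℓ : K → ℂ} (hℓ : Continuous ℓ) (h_zero : ∀ a, Complex.exp (ℓ a) = H (0, a))
    (h_one : ∀ a, H (1, a) = φ a) : ∃ L, IsLogBranchOn L φ K := by
  let H' : C(I × K, {z : ℂ // z ≠ 0}) := ⟨fun x => ⟨H x, hH0 x⟩, by fun_prop⟩
  have hH' : ∀ a, H' (0, a) = (⟨Complex.exp (ℓ a), Complex.exp_ne_zero _⟩ : {z : ℂ // z ≠ 0}) :=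
    fun a => Subtype.ext (h_zero a).symm
  let lift : C(I × K, ℂ) := Complex.isCoveringMap_exp.liftHomotopy H' ⟨ℓ, hℓ⟩ hH'
  have hlift (x : I × K) : Complex.exp (lift x) = H x :=
    congrArg Subtype.val
      (congrFun (Complex.isCoveringMap_exp.liftHomotopy_lifts H' ⟨ℓ, hℓ⟩ hH') x)
  have hext (a : K) : Function.extend (↑) (fun a => lift (1, a)) (0 : X → ℂ) a = lift (1, a) :=
    Subtype.val_injective.extend_apply _ _ a
  refine ⟨Function.extend (↑) (fun a => lift (1, a)) (0 : X → ℂ), ?_, fun z hz => ?_⟩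
  · rw [continuousOn_iff_continuous_domRestrict]
    have : Continuous fun a : K => lift (1, a) := by fun_prop
    exact this.congr fun a => (hext a).symm
  · rw [hext ⟨z, hz⟩, hlift, h_one]

end IsLogBranchOn

namespace HasContinuousLog

variable {K K₁ K₂ : Set X}

theorem of_contractibleSpace [ContractibleSpace K] : HasContinuousLog K := by
  intro φ hφ hφ0
  obtain ⟨x₀, ⟨F⟩⟩ := id_nullhomotopic K
  have hφK : Continuous fun a : K => φ a := continuousOn_iff_continuous_domRestrict.1 hφ
  exact IsLogBranchOn.exists_of_homotopy (H := fun x => φ (F.symm x))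
    (hφK.comp F.symm.continuous) (fun x => hφ0 _ (F.symm x).2)
    (continuous_const (y := Complex.log (φ x₀)))
    (fun a => by simp [Complex.exp_log (hφ0 _ x₀.2)]) (fun a => by simp)

theorem empty : HasContinuousLog (∅ : Set X) :=
  fun _ _ _ => ⟨0, continuousOn_empty _, fun _ hz => hz.elim⟩

theorem union (h₁ : HasContinuousLog K₁) (h₂ : HasContinuousLog K₂) (hK₁ : IsClosed K₁)
    (hK₂ : IsClosed K₂) (hK : IsPreconnected (K₁ ∩ K₂)) : HasContinuousLog (K₁ ∪ K₂) := by
  intro φ hφ hφ0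
  obtain ⟨L₁, hL₁⟩ := h₁ φ (hφ.mono subset_union_left) fun z hz => hφ0 z (.inl hz)
  obtain ⟨L₂, hL₂⟩ := h₂ φ (hφ.mono subset_union_right) fun z hz => hφ0 z (.inr hz)
  obtain ⟨L, hLK₁, hLK₂⟩ := hL₁.exists_glue hL₂ hK
  exact ⟨L, hLK₁.1.union_of_isClosed hLK₂.1 hK₁ hK₂, fun z hz => hz.elim (hLK₁.2 z) (hLK₂.2 z)⟩

theorem image_homeomorph (h : HasContinuousLog K) (e : X ≃ₜ Y) : HasContinuousLog (e '' K) := by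
  intro φ hφ hφ0
  obtain ⟨L, hL, hLφ⟩ := h (φ ∘ e) (hφ.comp e.continuous.continuousOn (mapsTo_image _ _))
    fun z hz => hφ0 _ (mem_image_of_mem _ hz)
  refine ⟨L ∘ e.symm, hL.comp e.symm.continuous.continuousOn ?_, ?_⟩
  · rintro _ ⟨z, hz, rfl⟩
    rwa [e.symm_apply_apply]
  · rintro _ ⟨z, hz, rfl⟩
    simpa using hLφ z hz

theorem image_Icc [T2Space X] {f : I → X} (hf : Continuous f) (hinj : Function.Injective f)
    {s t : I} (hst : s ≤ t) : HasContinuousLog (f '' Icc s t) := by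
  have hIcc : Subtype.val '' Icc s t = Icc (s : ℝ) t := image_subtype_val_Icc s t
  have : ContractibleSpace (f '' Icc s t) := by
    have := (convex_Icc (s : ℝ) t).contractibleSpace (nonempty_Icc.2 hst)
    rw [← hIcc] at this
    exact (((hf.isClosedEmbedding hinj).isEmbedding.homeomorphImage _).symm.trans
      (Topology.IsEmbedding.subtypeVal.homeomorphImage _)).contractibleSpace
  exact of_contractibleSpace

end HasContinuousLog

theorem not_isLogBranchOn_sphere (a : ℂ) {r : ℝ} (hr : 0 < r) (L : ℂ → ℂ) :
    ¬ IsLogBranchOn L (fun z => z - a) (sphere a r) := by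
  rintro ⟨hL, hexp⟩
  have hmem (θ : ℝ) : circleMap a r θ ∈ sphere a r := circleMap_mem_sphere a hr.le θ
  let g : ℝ → ℂ := fun θ => L (circleMap a r θ) - θ * Complex.I
  have hg : Continuous g :=
    (hL.comp_continuous (continuous_circleMap a r) hmem).sub (by fun_prop)
  have hexp_g (θ : ℝ) : Complex.exp (g θ) = r := by
    rw [Complex.exp_sub, show Complex.exp (L (circleMap a r θ)) = circleMap a r θ - a from
      hexp _ (hmem θ), circleMap_sub_center, circleMap_zero,
      mul_div_cancel_right₀ _ (Complex.exp_ne_zero _)]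
  have hg_const : g 0 = g (2 * Real.pi) := Complex.isCoveringMap_exp.const_of_comp hg
    (fun x y => Subtype.ext ((hexp_g x).trans (hexp_g y).symm)) 0 (2 * Real.pi)
  have hperiod : circleMap a r (2 * Real.pi) = circleMap a r 0 := by
    simpa using periodic_circleMap a r 0
  rw [show g 0 = L (circleMap a r 0) by simp [g], eq_comm] at hg_const
  simp [g, hperiod, sub_eq_self, Real.pi_ne_zero] at hg_const

end ContinuousLog

section PlaneSeparation

variable {X : Type*} [TopologicalSpace X]

theorem closure_connectedComponentIn_inter_subset (U : Set X) (x : X) :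
    closure (connectedComponentIn U x) ∩ U ⊆ connectedComponentIn U x := by
  intro z hz
  have hx : x ∈ U := by
    by_contra hx
    simp [connectedComponentIn_eq_empty hx] at hz
  exact (isPreconnected_connectedComponentIn.subset_closure
    (subset_inter subset_closure (connectedComponentIn_subset U x)) inter_subset_left
    ).subset_connectedComponentIn ⟨subset_closure (mem_connectedComponentIn hx), hx⟩
      inter_subset_right hz

theorem isPreconnected_setOf_le_norm {R : ℝ} (hR : 0 < R) :
    IsPreconnected {z : ℂ | R ≤ ‖z‖} := by
  have hexp : {z : ℂ | R ≤ ‖z‖} = Complex.exp '' {z | Real.log R ≤ z.re} := by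
    ext z
    constructor
    · intro (hz : R ≤ ‖z‖)
      refine ⟨Complex.log z, ?_, Complex.exp_log (norm_pos_iff.1 (hR.trans_le hz))⟩
      simpa [Complex.log_re] using Real.log_le_log hR hz
    · rintro ⟨y, hy : Real.log R ≤ y.re, rfl⟩
      simpa [Complex.norm_exp] using (Real.log_le_iff_le_exp hR).1 hy
  rw [hexp]
  exact (convex_halfSpace_re_ge _).isPreconnected.image _ Complex.continuous_exp.continuousOn

namespace HasContinuousLog

variable {K : Set ℂ}

/-- If the component `U` of `a` were bounded, a logarithm of `z - a` on `K` extended to the plane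
would replace `z - a` on `U` by a nonvanishing function, making `z - a` homotopically trivial on
a large circle. -/
theorem not_isBounded_connectedComponentIn_compl (h : HasContinuousLog K) (hK : IsClosed K)
    {a : ℂ} (ha : a ∈ Kᶜ) : ¬ Bornology.IsBounded (connectedComponentIn Kᶜ a) := by
  classical
  intro hbdd
  set U := connectedComponentIn Kᶜ a
  have haU : a ∈ U := mem_connectedComponentIn ha
  have hU : IsOpen U := hK.isOpen_compl.connectedComponentIn
  obtain ⟨g, hg, hexp_g⟩ := h (fun z => z - a) (by fun_prop)
    fun z hz => sub_ne_zero.2 (ne_of_mem_of_not_mem hz ha)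
  obtain ⟨G, hG⟩ := ContinuousMap.exists_restrict_eq (Y := ℂ) hK
    ⟨K.domRestrict g, continuousOn_iff_continuous_domRestrict.1 hg⟩
  have hGK (z : ℂ) (hz : z ∈ K) : G z = g z := DFunLike.congr_fun hG ⟨z, hz⟩
  have hfrontier : frontier U ⊆ K := fun z hz => by
    by_contra hzK
    rw [hU.frontier_eq] at hz
    exact hz.2 (closure_connectedComponentIn_inter_subset _ _ ⟨hz.1, hzK⟩)
  let f : ℂ → ℂ := U.piecewise (fun z => Complex.exp (G z)) fun z => z - a
  have hf : Continuous f := Continuous.piecewise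
    (fun z hz => by rw [hGK z (hfrontier hz), hexp_g z (hfrontier hz)]) (by fun_prop)
    (by fun_prop)
  have hf0 (z : ℂ) : f z ≠ 0 := by
    by_cases hz : z ∈ U
    · simp [f, hz, Complex.exp_ne_zero]
    · simpa [f, hz, sub_eq_zero] using (ne_of_mem_of_not_mem haU hz).symm
  have : ContractibleSpace (univ : Set ℂ) := convex_univ.contractibleSpace univ_nonempty
  obtain ⟨L, hL⟩ := of_contractibleSpace (K := univ) f hf.continuousOn fun z _ => hf0 z
  obtain ⟨r, hr, hUr⟩ := hbdd.subset_ball_lt 0 a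
  refine not_isLogBranchOn_sphere a hr L ((hL.mono (subset_univ _)).congr fun z hz => ?_)
  exact piecewise_eq_of_notMem _ _ _ fun hzU => (mem_ball.1 (hUr hzU)).ne hz

theorem isPreconnected_compl (h : HasContinuousLog K) (hK : IsCompact K) :
    IsPreconnected Kᶜ := by
  obtain ⟨R, hR, hKR⟩ := hK.isBounded.subset_ball_lt 0 0
  have hfar : {z : ℂ | R ≤ ‖z‖} ⊆ Kᶜ := fun z hz hzK =>
    (mem_ball_zero_iff.1 (hKR hzK)).not_ge hz
  refine isPreconnected_of_forall (R : ℂ) fun x hx => ?_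
  obtain ⟨y, hy, hyR⟩ : ∃ y ∈ connectedComponentIn Kᶜ x, R ≤ ‖y‖ := by
    by_contra! hlt
    exact h.not_isBounded_connectedComponentIn_compl hK.isClosed hx
      (isBounded_ball.subset fun y hy => mem_ball_zero_iff.2 (hlt y hy))
  exact ⟨connectedComponentIn Kᶜ x ∪ {z | R ≤ ‖z‖},
    union_subset (connectedComponentIn_subset _ _) hfar,
    .inr (by simp [abs_of_pos hR]), .inl (mem_connectedComponentIn hx),
    isPreconnected_connectedComponentIn.union y hy hyR (isPreconnected_setOf_le_norm hR)⟩

theorem isPreconnected_compl_prod {K : Set (ℝ × ℝ)} (h : HasContinuousLog K) (hK : IsCompact K) :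
    IsPreconnected Kᶜ := by
  let e : ℝ × ℝ ≃ₜ ℂ := Complex.equivRealProdCLM.symm.toHomeomorph
  rw [← e.isPreconnected_image, e.image_compl]
  exact (h.image_homeomorph e).isPreconnected_compl (hK.image e.continuous)

end HasContinuousLog

theorem exists_isLogBranchOn_compl_range {p q : ℂ} (α : _root_.Path p q) :
    ∃ L, IsLogBranchOn L (fun z => (z - q) / (z - p)) (range α)ᶜ := by
  have hne (z : ((range α)ᶜ : Set ℂ)) (t : I) : (z : ℂ) - α t ≠ 0 :=
    sub_ne_zero.2 fun h => z.2 ⟨t, h.symm⟩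
  have hp (z : ((range α)ᶜ : Set ℂ)) : (z : ℂ) - p ≠ 0 := by simpa using hne z 0
  exact IsLogBranchOn.exists_of_homotopy
    (H := fun x : I × ((range α)ᶜ : Set ℂ) => (x.2 - α x.1) / (x.2 - p))
    (Continuous.div (by fun_prop) (by fun_prop) fun x => hp x.2)
    (fun x => div_ne_zero (hne x.2 x.1) (hp x.2)) (continuous_const (y := 0))
    (fun z => by simp [div_self (hp z)]) (fun z => by simp)

/-- If the complement were connected, the branches of `log ((z - q) / (z - p))` off the two paths
would agree up to a constant, giving one branch on the plane minus `{p, q}`; but the winding number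
about `p` alone obstructs it. -/
theorem not_isPreconnected_compl_range_union_range {p q : ℂ} (hpq : p ≠ q) (α β : _root_.Path p q)
    (hαβ : range α ∩ range β ⊆ {p, q}) : ¬ IsPreconnected (range α ∪ range β)ᶜ := by
  intro hpre
  obtain ⟨L, hL⟩ := exists_isLogBranchOn_compl_range α
  obtain ⟨M, hM⟩ := exists_isLogBranchOn_compl_range β
  obtain ⟨N, hNα, hNβ⟩ := hL.exists_glue hM (by rwa [← compl_union])
  have hN : IsLogBranchOn N (fun z => (z - q) / (z - p)) ((range α)ᶜ ∪ (range β)ᶜ) :=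
    ⟨hNα.1.union_of_isOpen hNβ.1 (isCompact_range α.continuous).isClosed.isOpen_compl
      (isCompact_range β.continuous).isClosed.isOpen_compl,
      fun z hz => hz.elim (hNα.2 z) (hNβ.2 z)⟩
  set r := dist q p / 2 with hr
  have hr_pos : 0 < r := half_pos (dist_pos.2 hpq.symm)
  have hp_notMem : p ∉ sphere p r := by simp [hr_pos.ne]
  have hq_notMem : q ∉ closedBall p r := by simp [hr, hpq.symm]
  have hsphere : sphere p r ⊆ (range α)ᶜ ∪ (range β)ᶜ := fun z hz => by
    rw [← compl_inter]
    intro hzαβ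
    rcases hαβ hzαβ with rfl | rfl
    exacts [hp_notMem hz, hq_notMem (sphere_subset_closedBall hz)]
  have : ContractibleSpace (closedBall p r) :=
    (convex_closedBall p r).contractibleSpace (nonempty_closedBall.2 hr_pos.le)
  obtain ⟨K, hK⟩ := HasContinuousLog.of_contractibleSpace (K := closedBall p r) (fun z => z - q)
    (by fun_prop) fun z hz => sub_ne_zero.2 (ne_of_mem_of_not_mem hz hq_notMem)
  refine not_isLogBranchOn_sphere p hr_pos (K - N)
    (((hK.mono sphere_subset_closedBall).sub (hN.mono hsphere)).congr fun z hz => ?_)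
  have hzq : z - q ≠ 0 :=
    sub_ne_zero.2 (ne_of_mem_of_not_mem (sphere_subset_closedBall hz) hq_notMem)
  have hzp : z - p ≠ 0 := sub_ne_zero.2 (ne_of_mem_of_not_mem hz hp_notMem)
  simp only [Pi.div_apply]
  field_simp

theorem not_isPreconnected_compl_range_union_range_prod {p q : ℝ × ℝ} (hpq : p ≠ q)
    (α β : _root_.Path p q) (hαβ : range α ∩ range β ⊆ {p, q}) :
    ¬ IsPreconnected (range α ∪ range β)ᶜ := by
  let e : ℝ × ℝ ≃ₜ ℂ := Complex.equivRealProdCLM.symm.toHomeomorph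
  have hrange (γ : _root_.Path p q) : range (γ.map e.continuous) = e '' range γ := range_comp e γ
  rw [← e.isPreconnected_image, e.image_compl, image_union, ← hrange, ← hrange]
  refine not_isPreconnected_compl_range_union_range (e.injective.ne hpq) _ _ ?_
  rw [hrange, hrange, ← image_inter e.injective, ← image_pair]
  exact image_mono hαβ

end PlaneSeparation

section Components

variable {X : Type*} [TopologicalSpace X] {U V S J K : Set X} {y : X}

theorem connectedComponentIn_eq_of_subset (hy : y ∈ U) (hVU : V ⊆ U)
    (h : connectedComponentIn U y ⊆ V) : connectedComponentIn V y = connectedComponentIn U y :=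
  (connectedComponentIn_mono y hVU).antisymm
    (isPreconnected_connectedComponentIn.subset_connectedComponentIn (mem_connectedComponentIn hy)
      h)

theorem exists_disjoint_connectedComponentIn (hU : ¬ IsPreconnected U) (hS : IsPreconnected S)
    (hSU : S ⊆ U) : ∃ y ∈ U, Disjoint (connectedComponentIn U y) S := by
  rcases S.eq_empty_or_nonempty with rfl | ⟨x, hx⟩
  · obtain ⟨y, hy⟩ : U.Nonempty := nonempty_iff_ne_empty.2 fun h => hU (h ▸ isPreconnected_empty)
    exact ⟨y, hy, disjoint_empty _⟩
  · obtain ⟨y, hy, hyx⟩ : ∃ y ∈ U, y ∉ connectedComponentIn U x := by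
      by_contra! h
      exact hU ((connectedComponentIn_subset U x).antisymm h ▸ isPreconnected_connectedComponentIn)
    refine ⟨y, hy, disjoint_left.2 fun z hzy hzS => hyx ?_⟩
    rw [connectedComponentIn_eq (hS.subset_connectedComponentIn hx hSU hzS),
      ← connectedComponentIn_eq hzy]
    exact mem_connectedComponentIn hy

theorem subset_of_closure_connectedComponentIn_inter_subset [LocallyConnectedSpace X]
    (hJ : IsClosed J) (hKJ : K ⊆ J) (hK : IsPreconnected Kᶜ) (hy : y ∈ Jᶜ)
    (hfr : closure (connectedComponentIn Jᶜ y) ∩ J ⊆ K) : J ⊆ K := by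
  have hsub : Kᶜ ⊆ connectedComponentIn Jᶜ y := by
    refine hK.subset_of_closure_inter_subset hJ.isOpen_compl.connectedComponentIn
      ⟨y, fun h => hy (hKJ h), mem_connectedComponentIn hy⟩ fun z hz => ?_
    exact closure_connectedComponentIn_inter_subset _ _ ⟨hz.1, fun hzJ => hz.2 (hfr ⟨hz.1, hzJ⟩)⟩
  exact compl_subset_compl.1 (hsub.trans (connectedComponentIn_subset _ _))

end Components

section ArcBoundary

variable {X : Type*} [TopologicalSpace X] [T2Space X]

theorem HasContinuousLog.union_image_Icc_union_image_Icc {f : I → X} (hf : Continuous f)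
    (hinj : Function.Injective f) {R : Set X} (hR : HasContinuousLog R) (hRc : IsCompact R)
    (hfR : range f ∩ R ⊆ {f 0, f 1}) {s t : I} (hst : s < t) :
    HasContinuousLog (R ∪ f '' Icc 0 s ∪ f '' Icc t 1) := by
  have hclosed (a b : I) : IsClosed (f '' Icc a b) := (isCompact_Icc.image hf).isClosed
  have hzero : R ∩ f '' Icc 0 s ⊆ {f 0} := by
    rintro _ ⟨hx, z, hz, rfl⟩
    refine (hfR ⟨mem_range_self z, hx⟩).resolve_right fun h => ?_
    exact (hz.2.trans_lt hst).not_ge (hinj h ▸ le_top)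
  have hone : (R ∪ f '' Icc 0 s) ∩ f '' Icc t 1 ⊆ {f 1} := by
    rintro _ ⟨hx | ⟨z', hz', hzz'⟩, z, hz, rfl⟩
    · refine (hfR ⟨mem_range_self z, hx⟩).resolve_left fun h => ?_
      exact (hst.trans_le hz.1).not_ge (hinj h ▸ bot_le)
    · rw [hinj hzz'] at hz'
      exact ((hz'.2.trans_lt hst).not_ge hz.1).elim
  exact (hR.union (image_Icc hf hinj bot_le) hRc.isClosed (hclosed _ _)
    (subsingleton_singleton.anti hzero).isPreconnected).union (image_Icc hf hinj le_top)
    (hRc.isClosed.union (hclosed _ _)) (hclosed _ _)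
    (subsingleton_singleton.anti hone).isPreconnected

/-- A component missing a neighbourhood of a point of the arc would have its frontier in the set
left after deleting a subarc there, and that set does not separate the plane. -/
theorem range_subset_closure_connectedComponentIn {f : I → ℝ × ℝ} (hf : Continuous f)
    (hinj : Function.Injective f) {R : Set (ℝ × ℝ)} (hR : HasContinuousLog R) (hRc : IsCompact R)
    (hfR : range f ∩ R ⊆ {f 0, f 1}) {y : ℝ × ℝ} (hy : y ∈ (range f ∪ R)ᶜ) :
    range f ⊆ closure (connectedComponentIn (range f ∪ R)ᶜ y) := by
  set D := connectedComponentIn (range f ∪ R)ᶜ y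
  suffices hIoo : Ioo 0 1 ⊆ f ⁻¹' closure D by
    have := closure_minimal hIoo (isClosed_closure.preimage hf)
    rw [closure_Ioo zero_ne_one] at this
    exact range_subset_iff.2 fun t => this ⟨bot_le, le_top⟩
  intro t ht
  by_contra htD
  obtain ⟨s, s', hts, hss'⟩ := (mem_nhds_iff_exists_Ioo_subset' ⟨0, ht.1⟩ ⟨1, ht.2⟩).1
    ((isClosed_closure.isOpen_compl.preimage hf).mem_nhds htD)
  have hIcc (a b : I) : IsCompact (f '' Icc a b) := isCompact_Icc.image hf
  have hK : IsPreconnected (R ∪ f '' Icc 0 s ∪ f '' Icc s' 1)ᶜ :=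
    (hR.union_image_Icc_union_image_Icc hf hinj hRc hfR (hts.1.trans hts.2)
      ).isPreconnected_compl_prod ((hRc.union (hIcc _ _)).union (hIcc _ _))
  have hKJ : R ∪ f '' Icc 0 s ∪ f '' Icc s' 1 ⊆ range f ∪ R :=
    union_subset (union_subset subset_union_right ((image_subset_range _ _).trans
      subset_union_left)) ((image_subset_range _ _).trans subset_union_left)
  have hfrontier : closure D ∩ (range f ∪ R) ⊆ R ∪ f '' Icc 0 s ∪ f '' Icc s' 1 := by
    rintro _ ⟨hxD, ⟨z, rfl⟩ | hxR⟩
    · rcases le_or_gt z s with hzs | hzs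
      · exact .inl (.inr ⟨z, ⟨bot_le, hzs⟩, rfl⟩)
      · exact .inr ⟨z, ⟨not_lt.1 fun hzs' => hss' ⟨hzs, hzs'⟩ hxD, le_top⟩, rfl⟩
    · exact .inl (.inl hxR)
  have htK : f t ∈ R ∪ f '' Icc 0 s ∪ f '' Icc s' 1 :=
    subset_of_closure_connectedComponentIn_inter_subset
      ((isCompact_range hf).union hRc).isClosed hKJ hK hy hfrontier (.inl (mem_range_self t))
  rcases htK with (htR | hts') | hts'
  · rcases hfR ⟨mem_range_self t, htR⟩ with h | h
    exacts [ht.1.ne' (hinj h), ht.2.ne (hinj h)]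
  · exact hts.1.not_ge ((hinj.mem_set_image.1 hts').2)
  · exact hts.2.not_ge ((hinj.mem_set_image.1 hts').1)

end ArcBoundary

section Walks

variable {V : Type*} {G : SimpleGraph V}

theorem exists_isPath_edgeSet_eq_insert {v : V} {w : G.Walk v v} (hw : w.IsCycle) {e : Sym2 V}
    (he : e ∈ w.edges) : ∃ (a b : V) (_ : G.Adj a b) (r : G.Walk b a), e = s(a, b) ∧ r.IsPath ∧
      s(a, b) ∉ r.edges ∧ w.edgeSet = insert s(a, b) r.edgeSet := by
  obtain ⟨a, b, h, rfl, p, q, rfl⟩ : ∃ (a b : V) (h : G.Adj a b), e = s(a, b) ∧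
      ∃ (p : G.Walk v a) (q : G.Walk b v), w = p.append (.cons h q) := by
    induction e with | _ a b
    have h := w.adj_of_mem_edges he
    rcases (Walk.isSubwalk_toWalk_iff_mem_edges h).2 he with ⟨p, q, hw⟩ | ⟨p, q, hw⟩
    · exact ⟨a, b, h, rfl, p, q, hw.trans (Walk.append_assoc _ _ _).symm⟩
    · exact ⟨b, a, h.symm, Sym2.eq_swap, p, q, hw.trans (Walk.append_assoc _ _ _).symm⟩
  have hsupport : (p.support.tail ++ q.support).Nodup := by
    simpa [Walk.tail_support_append] using hw.support_nodup
  have hedges : s(a, b) ∉ p.edges ++ q.edges := by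
    have := hw.edges_nodup
    rw [Walk.edges_append, Walk.edges_cons, List.nodup_middle] at this
    exact (List.nodup_cons.1 this).1
  refine ⟨a, b, h, q.append p, rfl, ?_, ?_, ?_⟩
  · rw [Walk.isPath_def, Walk.support_append]
    exact List.perm_append_comm.nodup_iff.1 hsupport
  · simpa [and_comm] using hedges
  · rw [Walk.edgeSet_append, Walk.edgeSet_append, Walk.edgeSet_cons, union_insert, union_comm]

end Walks

namespace PlanarEmbedding

variable {V : Type*} {G : SimpleGraph V} (emb : PlanarEmbedding G)

/-- The union of the arcs of the edges belonging to `S`; elements of `S` that are not edges of the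
graph contribute nothing. -/
def arcs (S : Set (Sym2 V)) : Set (ℝ × ℝ) :=
  ⋃ (u : V) (v : V) (h : G.Adj u v) (_ : s(u, v) ∈ S), emb.arc h

/-- The point set of the induced subgraph on `S`. -/
def inducedImage (S : Set V) : Set (ℝ × ℝ) :=
  emb.vpos '' S ∪ emb.arcs S.sym2

/-- The closed star of a vertex: its point together with the arcs of its edges. -/
def star (c : V) : Set (ℝ × ℝ) :=
  insert (emb.vpos c) (⋃ (b : V) (h : G.Adj c b), emb.arc h)

section Arcs

variable {emb} {S : Set (Sym2 V)} {a b c u v : V} {x : ℝ × ℝ}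

theorem mem_arcs : x ∈ emb.arcs S ↔ ∃ (u v : V) (h : G.Adj u v), s(u, v) ∈ S ∧ x ∈ emb.arc h := by
  simp only [arcs, mem_iUnion, exists_prop]

theorem left_mem_arc (h : G.Adj a b) : emb.vpos a ∈ emb.arc h := by
  obtain ⟨f, -, hf⟩ := emb.arc_isArc h
  exact hf ▸ ⟨0, f.source⟩

theorem right_mem_arc (h : G.Adj a b) : emb.vpos b ∈ emb.arc h :=
  emb.arc_symm h ▸ left_mem_arc h.symm

theorem vpos_mem_arc_of_mem (h : G.Adj a b) (hc : c ∈ s(a, b)) : emb.vpos c ∈ emb.arc h := by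
  rcases Sym2.mem_iff.1 hc with rfl | rfl
  exacts [left_mem_arc h, right_mem_arc h]

theorem arc_congr (h : G.Adj a b) (h' : G.Adj u v) (he : s(a, b) = s(u, v)) :
    emb.arc h = emb.arc h' := by
  rcases Sym2.eq_iff.1 he with ⟨rfl, rfl⟩ | ⟨rfl, rfl⟩
  exacts [rfl, emb.arc_symm h']

theorem isCompact_arc (h : G.Adj a b) : IsCompact (emb.arc h) := by
  obtain ⟨f, -, hf⟩ := emb.arc_isArc h
  exact hf ▸ isCompact_range f.continuous

theorem hasContinuousLog_arc (h : G.Adj a b) : HasContinuousLog (emb.arc h) := by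
  obtain ⟨f, hinj, hf⟩ := emb.arc_isArc h
  rw [← hf, ← image_univ, ← Icc_bot_top]
  exact .image_Icc f.continuous hinj bot_le

@[simp] theorem arcs_empty : emb.arcs ∅ = ∅ := by
  simp [arcs]

theorem arcs_insert (h : G.Adj a b) : emb.arcs (insert s(a, b) S) = emb.arc h ∪ emb.arcs S := by
  ext x
  simp only [mem_union, mem_arcs, mem_insert_iff]
  constructor
  · rintro ⟨u, v, huv, he | he, hx⟩
    exacts [.inl (arc_congr huv h he ▸ hx), .inr ⟨u, v, huv, he, hx⟩]
  · rintro (hx | ⟨u, v, huv, he, hx⟩)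
    exacts [⟨a, b, h, .inl rfl, hx⟩, ⟨u, v, huv, .inr he, hx⟩]

theorem arc_subset_arcs (h : G.Adj a b) (hS : s(a, b) ∈ S) : emb.arc h ⊆ emb.arcs S :=
  fun _ hx => mem_arcs.2 ⟨a, b, h, hS, hx⟩

theorem arcs_subset_image : emb.arcs S ⊆ emb.image := fun x hx => by
  obtain ⟨a, b, h, -, hx⟩ := mem_arcs.1 hx
  exact .inr (mem_iUnion₂.2 ⟨a, b, mem_iUnion.2 ⟨h, hx⟩⟩)

theorem arc_inter_arcs_subset (h : G.Adj a b) (hS : s(a, b) ∉ S) :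
    emb.arc h ∩ emb.arcs S ⊆ emb.vpos '' {c | c ∈ s(a, b) ∧ ∃ e ∈ S, c ∈ e} := by
  rintro x ⟨hx, hxS⟩
  obtain ⟨u, v, huv, he, hxuv⟩ := mem_arcs.1 hxS
  obtain ⟨c, ⟨hcab, hcuv⟩, rfl⟩ := emb.arc_inter h huv (ne_of_mem_of_not_mem he hS).symm ⟨hx, hxuv⟩
  exact ⟨c, ⟨Sym2.mem_iff.2 hcab, s(u, v), he, Sym2.mem_iff.2 hcuv⟩, rfl⟩

theorem arc_inter_arcs_subset_pair (h : G.Adj a b) (hS : s(a, b) ∉ S) :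
    emb.arc h ∩ emb.arcs S ⊆ {emb.vpos a, emb.vpos b} := by
  rw [← image_pair]
  exact (arc_inter_arcs_subset h hS).trans (image_mono fun c hc => Sym2.mem_iff.1 hc.1)

theorem not_arc_subset_arcs (h : G.Adj a b) (hS : s(a, b) ∉ S) : ¬ emb.arc h ⊆ emb.arcs S := by
  intro hsub
  obtain ⟨f, hinj, hf⟩ := emb.arc_isArc h
  obtain ⟨t, ht0, ht1⟩ := exists_between (zero_lt_one : (0 : I) < 1)
  have ht : f t ∈ emb.arc h := hf ▸ mem_range_self t
  rcases arc_inter_arcs_subset_pair h hS ⟨ht, hsub ht⟩ with hta | htb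
  · exact ht0.ne' (hinj (hta.trans f.source.symm))
  · exact ht1.ne (hinj (htb.trans f.target.symm))

end Arcs

section Walks

variable {emb} {u v : V}

theorem isCompact_arcs_edgeSet (p : G.Walk u v) : IsCompact (emb.arcs p.edgeSet) := by
  induction p with
  | nil => simp
  | cons h p ih =>
    rw [Walk.edgeSet_cons, arcs_insert h]
    exact (isCompact_arc h).union ih

theorem exists_path_range_eq (p : G.Walk u v) : ∃ f : _root_.Path (emb.vpos u) (emb.vpos v),
    range f = insert (emb.vpos v) (emb.arcs p.edgeSet) := by
  induction p with
  | nil => exact ⟨.refl _, by simp⟩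
  | cons h p ih =>
    obtain ⟨f, -, hf⟩ := emb.arc_isArc h
    obtain ⟨g, hg⟩ := ih
    exact ⟨f.trans g, by
      rw [_root_.Path.trans_range, hf, hg, Walk.edgeSet_cons, arcs_insert h, union_insert]⟩

theorem hasContinuousLog_arcs_edgeSet {p : G.Walk u v} (hp : p.IsPath) :
    HasContinuousLog (emb.arcs p.edgeSet) := by
  induction p with
  | nil => simpa using HasContinuousLog.empty
  | @cons a b _ h p ih =>
    obtain ⟨hp, ha⟩ := Walk.cons_isPath_iff _ _ |>.1 hp
    have hinter : emb.arc h ∩ emb.arcs p.edgeSet ⊆ {emb.vpos b} := by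
      refine (arc_inter_arcs_subset h fun he => ha (p.fst_mem_support_of_mem_edges he)).trans ?_
      rintro _ ⟨c, ⟨hc, e, he, hce⟩, rfl⟩
      rcases Sym2.mem_iff.1 hc with rfl | rfl
      exacts [(ha (p.mem_support_of_mem_edges he hce)).elim, rfl]
    rw [Walk.edgeSet_cons, arcs_insert h]
    exact (hasContinuousLog_arc h).union (ih hp) (isCompact_arc h).isClosed
      (isCompact_arcs_edgeSet p).isClosed (subsingleton_singleton.anti hinter).isPreconnected

theorem not_isPreconnected_compl_arcs_edgeSet {w : G.Walk v v} (hw : w.IsCycle) :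
    ¬ IsPreconnected (emb.arcs w.edgeSet)ᶜ := by
  obtain ⟨e, he⟩ := List.exists_mem_of_ne_nil _ (Walk.edges_eq_nil.not.2 hw.not_nil)
  obtain ⟨a, b, h, r, -, -, hr, hwr⟩ := exists_isPath_edgeSet_eq_insert hw he
  obtain ⟨f, -, hf⟩ := emb.arc_isArc h
  obtain ⟨g, hg⟩ := emb.exists_path_range_eq r
  have hrange : range f ∪ range g.symm = emb.arcs w.edgeSet := by
    rw [_root_.Path.symm_range, hf, hg, hwr, arcs_insert h, union_insert, insert_eq_of_mem]
    exact .inl (left_mem_arc h)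
  rw [← hrange]
  refine not_isPreconnected_compl_range_union_range_prod (emb.vinj.ne h.ne) f g.symm ?_
  rw [_root_.Path.symm_range, hf, hg]
  rintro x ⟨hx, rfl | hxr⟩
  exacts [.inl rfl, arc_inter_arcs_subset_pair h (S := r.edgeSet) hr ⟨hx, hxr⟩]

theorem arc_subset_closure_connectedComponentIn {w : G.Walk v v} (hw : w.IsCycle) {y : ℝ × ℝ}
    (hy : y ∈ (emb.arcs w.edgeSet)ᶜ) {a b : V} (h : G.Adj a b) (he : s(a, b) ∈ w.edges) :
    emb.arc h ⊆ closure (connectedComponentIn (emb.arcs w.edgeSet)ᶜ y) := by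
  obtain ⟨a', b', h', r, hab, hr, hr_notMem, hwr⟩ := exists_isPath_edgeSet_eq_insert hw he
  rw [hwr, arcs_insert h'] at hy ⊢
  rw [arc_congr h h' hab]
  have hinter := arc_inter_arcs_subset_pair (emb := emb) (S := r.edgeSet) h' hr_notMem
  obtain ⟨f, hinj, hf⟩ := emb.arc_isArc h'
  rw [← hf] at hy hinter ⊢
  exact range_subset_closure_connectedComponentIn f.continuous hinj
    (hasContinuousLog_arcs_edgeSet hr) (isCompact_arcs_edgeSet r)
    (by simpa using hinter) hy

end Walks

section InducedImage

variable {emb} {S : Set V} {a b c : V}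

theorem vpos_mem_inducedImage : emb.vpos c ∈ emb.inducedImage S ↔ c ∈ S := by
  refine ⟨?_, fun hc => .inl (mem_image_of_mem _ hc)⟩
  rintro (hc | hc)
  · exact emb.vinj.mem_set_image.1 hc
  · obtain ⟨a, b, h, ⟨ha, hb⟩, hc⟩ := mem_arcs.1 hc
    rcases emb.arc_vertex h c hc with rfl | rfl
    exacts [ha, hb]

theorem arc_inter_inducedImage_subset (h : G.Adj a b) (ha : a ∉ S) :
    emb.arc h ∩ emb.inducedImage S ⊆ {emb.vpos b} := by
  have hab : s(a, b) ∉ S.sym2 := fun he => ha he.1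
  rintro x ⟨hx, hxS⟩
  obtain ⟨c, hc, rfl⟩ : ∃ c ∈ S, emb.vpos c = x := hxS.elim id fun hxS => by
    obtain ⟨c, ⟨-, e, he, hce⟩, rfl⟩ := arc_inter_arcs_subset h hab ⟨hx, hxS⟩
    exact ⟨c, mem_sym2_iff_subset.1 he hce, rfl⟩
  rcases emb.arc_vertex h c hx with rfl | rfl
  exacts [(ha hc).elim, rfl]

theorem isPreconnected_arc_sdiff_inducedImage (h : G.Adj a b) (ha : a ∉ S) :
    IsPreconnected (emb.arc h \ emb.inducedImage S) := by
  have hinter := arc_inter_inducedImage_subset h ha (emb := emb)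
  obtain ⟨f, hinj, hf⟩ := emb.arc_isArc h
  rw [← hf] at hinter ⊢
  refine (isPreconnected_Iio.image f f.continuous.continuousOn).subset_closure (s := f '' Iio 1)
    ?_ ?_
  · rintro _ ⟨t, ht, rfl⟩
    refine ⟨mem_range_self t, fun hS => ht.ne (hinj ?_)⟩
    exact (hinter ⟨mem_range_self t, hS⟩).trans f.target.symm
  · have hdense : closure (Iio (1 : I)) = univ := by
      rw [closure_Iio' ⟨0, zero_lt_one⟩]
      exact Iic_top
    rw [← image_univ, ← hdense]
    exact sdiff_subset.trans (image_closure_subset_closure_image f.continuous)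

theorem isPreconnected_star_sdiff_inducedImage (hc : c ∉ S) :
    IsPreconnected (emb.star c \ emb.inducedImage S) := by
  have hcS : emb.vpos c ∉ emb.inducedImage S := vpos_mem_inducedImage.not.2 hc
  refine isPreconnected_of_forall (emb.vpos c) fun x hx => ?_
  rcases hx with ⟨rfl | hx, hxS⟩
  · exact ⟨{emb.vpos c}, singleton_subset_iff.2 ⟨.inl rfl, hcS⟩, rfl, rfl, isPreconnected_singleton⟩
  · obtain ⟨b, h, hx⟩ := mem_iUnion₂.1 hx
    exact ⟨emb.arc h \ emb.inducedImage S,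
      sdiff_subset_sdiff_left fun z hz => .inr (mem_iUnion₂.2 ⟨b, h, hz⟩),
      ⟨left_mem_arc h, hcS⟩, ⟨hx, hxS⟩, isPreconnected_arc_sdiff_inducedImage h hc⟩

theorem image_sdiff_inducedImage :
    emb.image \ emb.inducedImage S = ⋃ c : ↥Sᶜ, emb.star c \ emb.inducedImage S := by
  have hstar {a b : V} (h : G.Adj a b) : emb.arc h ⊆ emb.star a :=
    fun x hx => .inr (mem_iUnion₂.2 ⟨b, h, hx⟩)
  ext x
  rw [mem_iUnion]
  constructor
  · rintro ⟨⟨c, rfl⟩ | hx, hxS⟩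
    · exact ⟨⟨c, fun hc => hxS (vpos_mem_inducedImage.2 hc)⟩, .inl rfl, hxS⟩
    · obtain ⟨a, b, h, hx⟩ : ∃ (a b : V) (h : G.Adj a b), x ∈ emb.arc h := by
        simpa only [mem_iUnion] using hx
      by_cases ha : a ∈ S
      · have hxS_of_mem (hb : b ∈ S) : x ∈ emb.inducedImage S :=
          .inr (arc_subset_arcs h (mk_mem_sym2_iff.2 ⟨ha, hb⟩) hx)
        exact ⟨⟨b, fun hb => hxS (hxS_of_mem hb)⟩, hstar h.symm (emb.arc_symm h ▸ hx), hxS⟩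
      · exact ⟨⟨a, ha⟩, hstar h hx, hxS⟩
  · rintro ⟨c, rfl | hx, hxS⟩
    · exact ⟨.inl (mem_range_self _), hxS⟩
    · exact ⟨.inr (mem_iUnion.2 ⟨c.1, hx⟩), hxS⟩

theorem isPreconnected_image_sdiff_inducedImage (hS : (G.induce Sᶜ).Preconnected) :
    IsPreconnected (emb.image \ emb.inducedImage S) := by
  rw [image_sdiff_inducedImage]
  refine IsPreconnected.iUnion_of_reflTransGen
    (fun c => isPreconnected_star_sdiff_inducedImage c.2) fun a b => ?_
  refine Relation.ReflTransGen.mono (r := (G.induce Sᶜ).Adj) (fun c d (hcd : G.Adj c d) => ?_) _ _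
    ((reachable_iff_reflTransGen a b).1 (hS a b))
  have hd : emb.vpos d ∉ emb.inducedImage S := vpos_mem_inducedImage.not.2 d.2
  exact ⟨emb.vpos d, ⟨.inr (mem_iUnion₂.2 ⟨d.1, hcd, right_mem_arc hcd⟩), hd⟩, .inl rfl, hd⟩

theorem arcs_edgeSet_eq_inducedImage {w : G.Walk a a} (hw : w.IsCycle)
    (hchord : ∀ a ∈ w.support, ∀ b ∈ w.support, G.Adj a b → s(a, b) ∈ w.edges) :
    emb.arcs w.edgeSet = emb.inducedImage {x | x ∈ w.support} := by
  apply Subset.antisymm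
  · intro x hx
    obtain ⟨a, b, h, he, hx⟩ := mem_arcs.1 hx
    exact .inr (arc_subset_arcs h (mk_mem_sym2_iff.2 ⟨w.fst_mem_support_of_mem_edges he,
      w.snd_mem_support_of_mem_edges he⟩) hx)
  · rintro x (⟨c, hc, rfl⟩ | hx)
    · obtain ⟨e, he, hce⟩ := (Walk.mem_support_iff_exists_mem_edges_of_not_nil hw.not_nil).1 hc
      induction e with | _ a b
      have h := w.adj_of_mem_edges he
      exact arc_subset_arcs h he (vpos_mem_arc_of_mem h hce)
    · obtain ⟨a, b, h, ⟨ha, hb⟩, hx⟩ := mem_arcs.1 hx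
      exact arc_subset_arcs h (hchord a ha b hb h) hx

end InducedImage

section Faces

variable {emb} {v : V} {w : G.Walk v v} {y : ℝ × ℝ}

theorem isFace_connectedComponentIn {J : Set (ℝ × ℝ)} (hJ : J ⊆ emb.image) (hy : y ∈ Jᶜ)
    (hdisj : Disjoint (connectedComponentIn Jᶜ y) emb.image) :
    emb.IsFace (connectedComponentIn Jᶜ y) := by
  have hsub := subset_compl_iff_disjoint_right.2 hdisj
  exact ⟨y, hsub (mem_connectedComponentIn hy),
    (connectedComponentIn_eq_of_subset hy (compl_subset_compl.2 hJ) hsub).symm⟩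

theorem boundaryEdges_connectedComponentIn (hw : w.IsCycle) (hy : y ∈ (emb.arcs w.edgeSet)ᶜ)
    (hdisj : Disjoint (connectedComponentIn (emb.arcs w.edgeSet)ᶜ y) emb.image) :
    emb.boundaryEdges (connectedComponentIn (emb.arcs w.edgeSet)ᶜ y) = {e | e ∈ w.edges} := by
  ext e
  constructor
  · rintro ⟨a, b, h, rfl, hsub⟩
    by_contra he
    obtain ⟨x, hx, hxw⟩ := not_subset.1 (not_arc_subset_arcs h (S := w.edgeSet) he)
    exact disjoint_left.1 hdisj (closure_connectedComponentIn_inter_subset _ _ ⟨hsub hx, hxw⟩)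
      (arcs_subset_image (arc_subset_arcs h (mem_univ _) hx))
  · intro he
    induction e with | _ a b
    have h := w.adj_of_mem_edges he
    exact ⟨a, b, h, rfl, arc_subset_closure_connectedComponentIn hw hy h he⟩

end Faces

end PlanarEmbedding

open PlanarEmbedding in
theorem peripheral_cycle_bounds_face_general {V : Type*} (G : SimpleGraph V) {v : V}
    (w : G.Walk v v) (hper : IsPeripheral G w) :
    ∀ emb : PlanarEmbedding G, ∃ F : Set (ℝ × ℝ),
      emb.IsFace F ∧ emb.boundaryEdges F = {e | e ∈ w.edges} := by
  obtain ⟨hw, hchord, hsep⟩ := hper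
  intro emb
  have hpre : (G.induce {x | x ∈ w.support}ᶜ).Preconnected :=
    hsep.elim (fun hempty a => (hempty.subset a.2).elim) (·.preconnected)
  have hrest : IsPreconnected (emb.image \ emb.arcs w.edgeSet) :=
    arcs_edgeSet_eq_inducedImage hw hchord ▸ isPreconnected_image_sdiff_inducedImage hpre
  obtain ⟨y, hy, hdisj⟩ := exists_disjoint_connectedComponentIn
    (not_isPreconnected_compl_arcs_edgeSet hw) hrest fun _ hx => hx.2
  have hdisj_image : Disjoint (connectedComponentIn (emb.arcs w.edgeSet)ᶜ y) emb.image :=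
    disjoint_left.2 fun x hx hximage =>
      disjoint_left.1 hdisj hx ⟨hximage, connectedComponentIn_subset _ _ hx⟩
  exact ⟨_, isFace_connectedComponentIn arcs_subset_image hy hdisj_image,
    boundaryEdges_connectedComponentIn hw hy hdisj_image⟩

/-- In a 3-connected finite planar graph, every induced non-separating (i.e. peripheral)
cycle bounds a face in every planar embedding. -/
theorem peripheral_cycle_bounds_face
    {V : Type*} [Fintype V] (G : SimpleGraph V) (h3 : ThreeConnected G)
    {v : V} (w : G.Walk v v) (hper : IsPeripheral G w) :
    ∀ emb : PlanarEmbedding G, ∃ F : Set (ℝ × ℝ),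
      emb.IsFace F ∧ emb.boundaryEdges F = {e | e ∈ w.edges} :=
  peripheral_cycle_bounds_face_general G w hper
end

section
/- Let G be a 3-connected planar graph (finite) with two embeddings in the sphere. Then every automorphism of G maps the boundary of each face to the boundary of a face; equivalently, every automorphism maps facial paths to facial paths. -/
open SimpleGraph

/-!
By 3-connectedness, among the cycles of `G` one whose side around a point of a face is minimal
bounds that face: an edge or vertex inside would provide an ear cutting the side into two smaller
ones. Such a cycle is peripheral, because any three internally disjoint arcs between two points
form a theta curve, each side of which misses one of the arcs: this forbids a chord, and it forbids
two vertices separated by the cycle, since the cycle would meet all three of the disjoint paths that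
3-connectedness yields between them. Conversely all vertices off a peripheral cycle lie on the same
side of it, so its other side is a face. Being peripheral does not depend on the embedding.
-/

/-! ### Continuous logarithms -/

section ContinuousLog

open Complex

variable {X : Type*} [TopologicalSpace X]

/-- `f` has a logarithm on `K` which is continuous on `K`. -/
def HasContinuousLogOn (f : X → ℂ) (K : Set X) : Prop :=
  ∃ l : X → ℂ, ContinuousOn l K ∧ ∀ z ∈ K, exp (l z) = f z

namespace HasContinuousLogOn

variable {f g : X → ℂ} {K L : Set X}

lemma mono (h : HasContinuousLogOn f L) (hKL : K ⊆ L) : HasContinuousLogOn f K :=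
  let ⟨l, hl, hexp⟩ := h
  ⟨l, hl.mono hKL, fun z hz => hexp z (hKL hz)⟩

lemma congr (h : HasContinuousLogOn f K) (hfg : Set.EqOn f g K) : HasContinuousLogOn g K :=
  let ⟨l, hl, hexp⟩ := h
  ⟨l, hl, fun z hz => (hexp z hz).trans (hfg hz)⟩

lemma inv (h : HasContinuousLogOn f K) : HasContinuousLogOn (fun z => (f z)⁻¹) K :=
  let ⟨l, hl, hexp⟩ := h
  ⟨fun z => -l z, hl.neg, fun z hz => by rw [exp_neg, hexp z hz]⟩

lemma of_subtype {l : K → ℂ} (hl : Continuous l) (hexp : ∀ z, exp (l z) = f z) :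
    HasContinuousLogOn f K := by
  classical
  refine ⟨fun z => if h : z ∈ K then l ⟨z, h⟩ else 0, ?_, fun z hz => by simp [hz, hexp]⟩
  rw [continuousOn_iff_continuous_domRestrict]
  convert hl using 1
  ext z
  simp [Set.domRestrict]

end HasContinuousLogOn

lemma exists_int_eq_add_of_exp_eq {S : Set X} (hS : IsPreconnected S) {l l' : X → ℂ}
    (hl : ContinuousOn l S) (hl' : ContinuousOn l' S) (hexp : ∀ z ∈ S, exp (l z) = exp (l' z)) :
    ∃ n : ℤ, ∀ z ∈ S, l z = l' z + n * (2 * Real.pi * I) := by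
  rcases S.eq_empty_or_nonempty with rfl | ⟨z₀, hz₀⟩
  · exact ⟨0, by simp⟩
  choose! n hn using fun z hz => exp_eq_exp_iff_exists_int.mp (hexp z hz)
  have hn_real : ∀ z ∈ S, (n z : ℝ) = ((l z - l' z) / (2 * Real.pi * I)).re := fun z hz => by
    rw [hn z hz, add_sub_cancel_left, mul_div_cancel_right₀ _ two_pi_I_ne_zero, intCast_re]
  have hn_cont : ContinuousOn n S := by
    rw [Int.isClosedEmbedding_coe_real.isInducing.continuousOn_iff]
    exact (continuous_re.comp_continuousOn ((hl.sub hl').div_const _)).congr hn_real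
  exact ⟨n z₀, fun z hz => by rw [← hS.constant hn_cont hz hz₀]; exact hn z hz⟩

lemma HasContinuousLogOn.of_eqOn_inter {f l l' : X → ℂ} {S T : Set X} (hl : ContinuousOn l S)
    (hexp : ∀ z ∈ S, exp (l z) = f z) (hl' : ContinuousOn l' T)
    (hexp' : ∀ z ∈ T, exp (l' z) = f z) (heq : Set.EqOn l l' (S ∩ T))
    (hST : IsOpen S ∧ IsOpen T ∨ IsClosed S ∧ IsClosed T) : HasContinuousLogOn f (S ∪ T) := by
  classical
  have hmS : Set.EqOn (S.piecewise l l') l S := S.piecewise_eqOn _ _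
  have hmT : Set.EqOn (S.piecewise l l') l' T := fun z hz => by
    by_cases hzS : z ∈ S
    · rw [hmS hzS, heq ⟨hzS, hz⟩]
    · exact S.piecewise_eq_of_notMem _ _ hzS
  refine ⟨S.piecewise l l', ?_, ?_⟩
  · rcases hST with ⟨hS, hT⟩ | ⟨hS, hT⟩
    · exact (hl.congr hmS).union_of_isOpen (hl'.congr hmT) hS hT
    · exact (hl.congr hmS).union_of_isClosed (hl'.congr hmT) hS hT
  · rintro z (hz | hz)
    · rw [hmS hz, hexp z hz]
    · rw [hmT hz, hexp' z hz]

lemma HasContinuousLogOn.union {f : X → ℂ} {S T : Set X} (hS : HasContinuousLogOn f S)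
    (hT : HasContinuousLogOn f T) (hinter : IsPreconnected (S ∩ T))
    (hST : IsOpen S ∧ IsOpen T ∨ IsClosed S ∧ IsClosed T) : HasContinuousLogOn f (S ∪ T) := by
  obtain ⟨l, hl, hexp⟩ := hS
  obtain ⟨l', hl', hexp'⟩ := hT
  obtain ⟨n, hn⟩ := exists_int_eq_add_of_exp_eq hinter (hl.mono Set.inter_subset_left)
    (hl'.mono Set.inter_subset_right) fun z hz => (hexp z hz.1).trans (hexp' z hz.2).symm
  refine .of_eqOn_inter hl hexp (l' := fun z => l' z + n * (2 * Real.pi * I)) (by fun_prop)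
    (fun z hz => ?_) hn hST
  rw [exp_add, exp_int_mul_two_pi_mul_I, mul_one, hexp' z hz]

lemma exists_continuous_log [SimplyConnectedSpace X] [LocallyPathConnectedSpace X] {f : X → ℂ}
    (hf : Continuous f) (hf₀ : ∀ x, f x ≠ 0) :
    ∃ l : X → ℂ, Continuous l ∧ ∀ x, exp (l x) = f x := by
  let F : C(X, {z : ℂ // z ≠ 0}) := ⟨fun x => ⟨f x, hf₀ x⟩, by fun_prop⟩
  obtain ⟨x₀⟩ := (inferInstance : Nonempty X)
  obtain ⟨l, ⟨-, hl⟩, -⟩ := isCoveringMap_exp.existsUnique_continuousMap_lifts F x₀ (log (f x₀))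
    (Subtype.ext (exp_log (hf₀ x₀)))
  exact ⟨l, l.continuous, fun x => congrArg Subtype.val (congrFun hl x)⟩

/-- Along a path `γ` from `q` to `p` avoiding `S`, the functions `(z - γ t) / (z - q)` deform the
constant `1` into `(z - p) / (z - q)`, and logarithms lift along homotopies. -/
lemma hasContinuousLogOn_of_path {S : Set ℂ} {p q : ℂ} (γ : Path q p) (hγ : ∀ t, γ t ∉ S) :
    HasContinuousLogOn (fun z => (z - p) * (z - q)⁻¹) S := by
  have hγ_ne (t) (x : S) : (x : ℂ) - γ t ≠ 0 := sub_ne_zero.mpr fun h => hγ t (h ▸ x.2)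
  have hq_ne (x : S) : (x : ℂ) - q ≠ 0 := by simpa using hγ_ne 0 x
  let H : C(unitInterval × S, {z : ℂ // z ≠ 0}) :=
    { toFun a := ⟨(a.2 - γ a.1) * (a.2 - q)⁻¹,
        mul_ne_zero (hγ_ne _ _) (inv_ne_zero (hq_ne _))⟩
      continuous_toFun := by
        refine Continuous.subtype_mk (Continuous.mul (by fun_prop) ?_) _
        exact Continuous.inv₀ (by fun_prop) fun a => hq_ne a.2 }
  have hH₀ : ∀ x, H (0, x) = (⟨_, ((0 : C(S, ℂ)) x).exp_ne_zero⟩ : {z : ℂ // z ≠ 0}) :=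
    fun x => Subtype.ext (by simp [H, hq_ne x])
  refine .of_subtype (l := fun x => isCoveringMap_exp.liftHomotopy H 0 hH₀ (1, x))
    (by fun_prop) fun x => ?_
  have hlift := congrFun (isCoveringMap_exp.liftHomotopy_lifts H 0 hH₀) (1, x)
  simpa [H] using congrArg Subtype.val hlift

lemma not_hasContinuousLogOn_sphere (p : ℂ) {r : ℝ} (hr : 0 < r) {n : ℤ} (hn : n ≠ 0) :
    ¬HasContinuousLogOn (fun z => (z - p) ^ n) (Metric.sphere p r) := by
  rintro ⟨l, hl, hexp⟩
  have hmem (t : ℝ) : circleMap p r t ∈ Metric.sphere p r := circleMap_mem_sphere p hr.le t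
  obtain ⟨k, hk⟩ := exists_int_eq_add_of_exp_eq isPreconnected_univ
    (l := fun t : ℝ => n * (log r + t * I)) (l' := fun t => l (circleMap p r t)) (by fun_prop)
    (hl.comp_continuous (continuous_circleMap p r) hmem).continuousOn fun t _ => by
      rw [hexp _ (hmem t), exp_int_mul, exp_add, exp_log (ofReal_ne_zero.mpr hr.ne'),
        ← circleMap_zero, ← circleMap_sub_center p]
  have h₀ := hk 0 (Set.mem_univ _)
  have h₁ := hk (2 * Real.pi) (Set.mem_univ _)
  rw [show circleMap p r (2 * Real.pi) = circleMap p r 0 by simp [circleMap], ← h₀] at h₁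
  simp [hn] at h₁

/-- If `(z - p) ^ n * g z` had a logarithm on the frontier of `U`, extending it to the plane and
dividing by `g` inside `U` would give a nonvanishing function on the plane equal to `(z - p) ^ n`
outside `U`; but that function has no logarithm on a large circle. -/
lemma not_hasContinuousLogOn_frontier {U : Set ℂ} (hU : IsOpen U) (hb : Bornology.IsBounded U)
    {p : ℂ} (hp : p ∈ U) {n : ℤ} (hn : n ≠ 0) {g : ℂ → ℂ} (hg : ContinuousOn g (closure U))
    (hg₀ : ∀ z ∈ closure U, g z ≠ 0) :
    ¬HasContinuousLogOn (fun z => (z - p) ^ n * g z) (frontier U) := by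
  classical
  rintro ⟨l, hl, hexp⟩
  obtain ⟨L, hL⟩ := ContinuousMap.exists_restrict_eq isClosed_frontier
    ⟨_, continuousOn_iff_continuous_domRestrict.mp hl⟩
  have hLl (z) (hz : z ∈ frontier U) : L z = l z := congrArg (fun f : C(_, ℂ) => f ⟨z, hz⟩) hL
  have hp_ne (z) (hz : z ∈ Uᶜ) : z - p ≠ 0 := sub_ne_zero.mpr fun e => hz (e ▸ hp)
  set h : ℂ → ℂ := U.piecewise (fun z => exp (L z) / g z) fun z => (z - p) ^ n
  have h_in : Set.EqOn h (fun z => exp (L z) / g z) (closure U) := fun z hz => by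
    by_cases hzU : z ∈ U
    · exact U.piecewise_eq_of_mem _ _ hzU
    have hz_fr : z ∈ frontier U := ⟨hz, fun hz' => hzU (interior_subset hz')⟩
    calc h z = (z - p) ^ n := U.piecewise_eq_of_notMem _ _ hzU
      _ = exp (L z) / g z := by
        rw [hLl z hz_fr, hexp z hz_fr, mul_div_cancel_right₀ _ (hg₀ z hz)]
  have h_out : Set.EqOn h (fun z => (z - p) ^ n) Uᶜ := U.piecewise_eqOn_compl _ _
  have h_cont : Continuous h := by
    have h_cont_in : ContinuousOn h (closure U) :=
      ((continuous_exp.comp L.continuous).continuousOn.div hg hg₀).congr h_in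
    have h_cont_out : ContinuousOn h Uᶜ :=
      ContinuousOn.congr (ContinuousOn.zpow₀ (by fun_prop) n fun z hz => Or.inl (hp_ne z hz)) h_out
    rw [← continuousOn_univ, ← Set.univ_subset_iff.mp
      ((Set.union_compl_self U).ge.trans (Set.union_subset_union_left _ subset_closure))]
    exact h_cont_in.union_of_isClosed h_cont_out isClosed_closure hU.isClosed_compl
  have h_ne (z) : h z ≠ 0 := by
    by_cases hz : z ∈ U
    · rw [h_in (subset_closure hz)]
      exact div_ne_zero (exp_ne_zero _) (hg₀ z (subset_closure hz))
    · rw [h_out hz]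
      exact zpow_ne_zero _ (hp_ne z hz)
  obtain ⟨l', hl', hexp'⟩ := exists_continuous_log h_cont h_ne
  obtain ⟨r, hr, hUr⟩ := hb.subset_ball_lt 0 p
  refine not_hasContinuousLogOn_sphere p hr hn ⟨l', hl'.continuousOn, fun z hz => ?_⟩
  rw [hexp', h_out fun hzU => (Metric.mem_ball.mp (hUr hzU)).ne hz]

end ContinuousLog

/-! ### Components of the complement of a plane compactum -/

section Components

variable {X : Type*} [TopologicalSpace X]

lemma isPreconnected_of_forall_connectedComponentIn_eq {U : Set X}
    (h : ∀ p ∈ U, ∀ q ∈ U, connectedComponentIn U p = connectedComponentIn U q) :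
    IsPreconnected U := by
  rcases U.eq_empty_or_nonempty with rfl | ⟨p, hp⟩
  · exact isPreconnected_empty
  rw [show U = connectedComponentIn U p from (connectedComponentIn_subset U p).antisymm'
    fun q hq => h p hp q hq ▸ mem_connectedComponentIn hq]
  exact isPreconnected_connectedComponentIn

lemma mem_connectedComponentIn_of_mem_closure [LocallyConnectedSpace X] {U : Set X}
    (hU : IsOpen U) {p z : X} (hz : z ∈ closure (connectedComponentIn U p)) (hzU : z ∈ U) :
    z ∈ connectedComponentIn U p := by
  obtain ⟨y, hyz, hyp⟩ :=
    mem_closure_iff.mp hz _ hU.connectedComponentIn (mem_connectedComponentIn hzU)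
  rw [connectedComponentIn_eq hyp, ← connectedComponentIn_eq hyz]
  exact mem_connectedComponentIn hzU

lemma frontier_connectedComponentIn_compl_subset [LocallyConnectedSpace X] {K : Set X}
    (hK : IsClosed K) (p : X) : frontier (connectedComponentIn Kᶜ p) ⊆ K := fun z hz => by
  by_contra hzK
  exact hz.2 (hK.isOpen_compl.connectedComponentIn.interior_eq.symm ▸
    mem_connectedComponentIn_of_mem_closure hK.isOpen_compl hz.1 hzK)

end Components

lemma isPreconnected_compl_closedBall {E : Type*} [NormedAddCommGroup E] [NormedSpace ℝ E]
    (h : 1 < Module.rank ℝ E) {r : ℝ} (hr : 0 ≤ r) :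
    IsPreconnected (Metric.closedBall (0 : E) r)ᶜ := by
  have himage : (fun a : ℝ × E => a.1 • a.2) '' (Set.Ioi r ×ˢ Metric.sphere 0 1) =
      (Metric.closedBall (0 : E) r)ᶜ := by
    ext z
    simp only [Set.mem_image, Set.mem_prod, Set.mem_Ioi, mem_sphere_zero_iff_norm, Prod.exists,
      Set.mem_compl_iff, mem_closedBall_zero_iff, not_le]
    constructor
    · rintro ⟨s, u, ⟨hs, hu⟩, rfl⟩
      rwa [norm_smul, hu, mul_one, Real.norm_of_nonneg (hr.trans hs.le)]
    · intro hz
      have hz₀ : ‖z‖ ≠ 0 := (hr.trans_lt hz).ne'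
      exact ⟨‖z‖, ‖z‖⁻¹ • z, ⟨hz, by simp [norm_smul, hz₀]⟩, smul_inv_smul₀ hz₀ z⟩
  rw [← himage]
  exact (isPreconnected_Ioi.prod (isPreconnected_sphere h 0 1)).image _ (by fun_prop)

lemma connectedComponentIn_compl_eq_of_not_isBounded {E : Type*} [NormedAddCommGroup E]
    [NormedSpace ℝ E] (h : 1 < Module.rank ℝ E) {K : Set E} (hK : Bornology.IsBounded K) {p q : E}
    (hp : ¬Bornology.IsBounded (connectedComponentIn Kᶜ p))
    (hq : ¬Bornology.IsBounded (connectedComponentIn Kᶜ q)) :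
    connectedComponentIn Kᶜ p = connectedComponentIn Kᶜ q := by
  obtain ⟨r, hr, hKr⟩ := hK.subset_closedBall_lt 0 0
  have hfar {x : E} (hx : ¬Bornology.IsBounded (connectedComponentIn Kᶜ x)) :
      ∃ z ∈ connectedComponentIn Kᶜ x, z ∈ (Metric.closedBall (0 : E) r)ᶜ :=
    Set.not_subset.mp fun hsub => hx (Metric.isBounded_closedBall.subset hsub)
  obtain ⟨y, hyp, hyr⟩ := hfar hp
  obtain ⟨z, hzq, hzr⟩ := hfar hq
  rw [connectedComponentIn_eq hyp, connectedComponentIn_eq hzq]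
  have hball := isPreconnected_compl_closedBall h hr.le
  exact connectedComponentIn_eq
    (hball.subset_connectedComponentIn hyr (Set.compl_subset_compl.mpr hKr) hzr)

section Eilenberg

variable {K L : Set ℂ} {p q : ℂ}

lemma connectedComponentIn_compl_eq_of_isBounded (hK : IsClosed K) (hp : p ∉ K) (hq : q ∉ K)
    (hlog : HasContinuousLogOn (fun z => (z - p) * (z - q)⁻¹) K)
    (hb : Bornology.IsBounded (connectedComponentIn Kᶜ p)) :
    connectedComponentIn Kᶜ p = connectedComponentIn Kᶜ q := by
  by_contra hne
  have hq_ne (z) (hz : z ∈ closure (connectedComponentIn Kᶜ p)) : z - q ≠ 0 :=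
    sub_ne_zero.mpr fun e => hne (connectedComponentIn_eq
      (mem_connectedComponentIn_of_mem_closure hK.isOpen_compl (e ▸ hz) hq))
  refine not_hasContinuousLogOn_frontier hK.isOpen_compl.connectedComponentIn hb
    (mem_connectedComponentIn hp) one_ne_zero (g := fun z => (z - q)⁻¹)
    (ContinuousOn.inv₀ (by fun_prop) hq_ne) (fun z hz => inv_ne_zero (hq_ne z hz)) ?_
  simpa only [zpow_one] using hlog.mono (frontier_connectedComponentIn_compl_subset hK p)

/-- Eilenberg's criterion. -/
theorem hasContinuousLogOn_iff_connectedComponentIn_eq (hK : IsCompact K) (hp : p ∉ K)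
    (hq : q ∉ K) :
    HasContinuousLogOn (fun z => (z - p) * (z - q)⁻¹) K ↔
      connectedComponentIn Kᶜ p = connectedComponentIn Kᶜ q := by
  constructor
  · intro hlog
    by_cases hbp : Bornology.IsBounded (connectedComponentIn Kᶜ p)
    · exact connectedComponentIn_compl_eq_of_isBounded hK.isClosed hp hq hlog hbp
    by_cases hbq : Bornology.IsBounded (connectedComponentIn Kᶜ q)
    · refine (connectedComponentIn_compl_eq_of_isBounded hK.isClosed hq hp ?_ hbq).symm
      exact hlog.inv.congr fun z _ => by simp
    · exact connectedComponentIn_compl_eq_of_not_isBounded (by simp) hK.isBounded hbp hbq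
  · intro heq
    have hpath := hK.isClosed.isOpen_compl.connectedComponentIn.isConnected_iff_isPathConnected.mp
      (isConnected_connectedComponentIn_iff.mpr hq)
    obtain ⟨γ, hγ⟩ := hpath.joinedIn q (mem_connectedComponentIn hq) p
      (heq ▸ mem_connectedComponentIn hp)
    exact hasContinuousLogOn_of_path γ fun t => connectedComponentIn_subset _ _ (hγ t)

/-- Janiszewski's theorem. -/
theorem connectedComponentIn_compl_union_eq (hK : IsCompact K) (hL : IsCompact L)
    (hinter : IsPreconnected (K ∩ L)) (hp : p ∉ K ∪ L) (hq : q ∉ K ∪ L)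
    (hpqK : connectedComponentIn Kᶜ p = connectedComponentIn Kᶜ q)
    (hpqL : connectedComponentIn Lᶜ p = connectedComponentIn Lᶜ q) :
    connectedComponentIn (K ∪ L)ᶜ p = connectedComponentIn (K ∪ L)ᶜ q := by
  rw [← hasContinuousLogOn_iff_connectedComponentIn_eq (hK.union hL) hp hq]
  rw [Set.mem_union, not_or] at hp hq
  rw [← hasContinuousLogOn_iff_connectedComponentIn_eq hK hp.1 hq.1] at hpqK
  rw [← hasContinuousLogOn_iff_connectedComponentIn_eq hL hp.2 hq.2] at hpqL
  exact hpqK.union hpqL hinter (Or.inr ⟨hK.isClosed, hL.isClosed⟩)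

end Eilenberg

section AllLogs

variable {X : Type*} [TopologicalSpace X]

/-- Every nowhere vanishing continuous function on `K` has a continuous logarithm. For plane
compacta this says that `K` does not separate the plane. -/
def HasAllContinuousLogs (K : Set X) : Prop :=
  ∀ f : X → ℂ, ContinuousOn f K → (∀ z ∈ K, f z ≠ 0) → HasContinuousLogOn f K

lemma HasAllContinuousLogs.union {K L : Set X} (hK : HasAllContinuousLogs K)
    (hL : HasAllContinuousLogs L) (hKc : IsClosed K) (hLc : IsClosed L)
    (hinter : IsPreconnected (K ∩ L)) : HasAllContinuousLogs (K ∪ L) := fun f hf hf₀ =>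
  (hK f (hf.mono Set.subset_union_left) fun z hz => hf₀ z (Or.inl hz)).union
    (hL f (hf.mono Set.subset_union_right) fun z hz => hf₀ z (Or.inr hz)) hinter
    (Or.inr ⟨hKc, hLc⟩)

lemma HasAllContinuousLogs.range {φ : unitInterval → X} (hφ : Topology.IsEmbedding φ) :
    HasAllContinuousLogs (Set.range φ) := fun f hf hf₀ => by
  obtain ⟨l, hl, hexp⟩ := exists_continuous_log
    (f := fun t : ℝ => f (φ (Set.projIcc 0 1 zero_le_one t)))
    (hf.comp_continuous (by have := hφ.continuous; fun_prop) fun t => ⟨_, rfl⟩)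
    fun t => hf₀ _ ⟨_, rfl⟩
  refine .of_subtype (l := fun z => l (hφ.toHomeomorph.symm z)) (by fun_prop) fun z => ?_
  have hz : φ (hφ.toHomeomorph.symm z) = z :=
    congrArg Subtype.val (hφ.toHomeomorph.apply_symm_apply z)
  rw [hexp, Set.projIcc_val, hz]

lemma HasAllContinuousLogs.isPreconnected_compl {K : Set ℂ} (h : HasAllContinuousLogs K)
    (hK : IsCompact K) : IsPreconnected Kᶜ := by
  refine isPreconnected_of_forall_connectedComponentIn_eq fun p hp q hq => ?_
  have hne {x : ℂ} (hx : x ∉ K) (z) (hz : z ∈ K) : z - x ≠ 0 := sub_ne_zero.mpr fun e => hx (e ▸ hz)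
  rw [← hasContinuousLogOn_iff_connectedComponentIn_eq hK hp hq]
  exact h _ (ContinuousOn.mul (by fun_prop) (ContinuousOn.inv₀ (by fun_prop) (hne hq)))
    fun z hz => mul_ne_zero (hne hp z hz) (inv_ne_zero (hne hq z hz))

end AllLogs

/-! ### Arcs -/

section Arcs

variable {X : Type*} [TopologicalSpace X]

/-- `A` is a simple arc with endpoints `a` and `b`. -/
def IsArc (A : Set X) (a b : X) : Prop :=
  ∃ f : Path a b, Function.Injective f ∧ Set.range f = A

lemma isArc_image_Icc {f : ℝ → X} {s t : ℝ} (hst : s < t) (hf : ContinuousOn f (Set.Icc s t))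
    (hinj : Set.InjOn f (Set.Icc s t)) : IsArc (f '' Set.Icc s t) (f s) (f t) := by
  let e := (iccHomeoI s t hst).symm
  refine ⟨⟨⟨fun x => f (e x), ?_⟩, by simp [e], by simp [e]⟩, ?_, ?_⟩
  · exact hf.comp_continuous (by fun_prop) fun x => (e x).2
  · exact fun x y hxy => e.injective (Subtype.ext (hinj (e x).2 (e y).2 hxy))
  · calc Set.range (fun x => f (e x)) = f '' Set.range (Subtype.val ∘ e) := by
          rw [← Set.range_comp]; rfl
      _ = f '' Set.Icc s t := by rw [e.surjective.range_comp, Subtype.range_coe]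

namespace IsArc

variable {A B : Set X} {a b c : X}

lemma left_mem (h : IsArc A a b) : a ∈ A := by
  obtain ⟨f, -, rfl⟩ := h
  exact ⟨0, f.source⟩

lemma symm (h : IsArc A a b) : IsArc A b a := by
  obtain ⟨f, hf, rfl⟩ := h
  exact ⟨f.symm, hf.comp unitInterval.symm_bijective.injective, f.symm_range⟩

lemma right_mem (h : IsArc A a b) : b ∈ A := h.symm.left_mem

lemma ne (h : IsArc A a b) : a ≠ b := by
  obtain ⟨f, hf, rfl⟩ := h
  exact fun e => zero_ne_one (hf (by rw [f.source, f.target, e] : f 0 = f 1))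

lemma isCompact (h : IsArc A a b) : IsCompact A := by
  obtain ⟨f, -, rfl⟩ := h
  exact isCompact_range f.continuous

lemma isPreconnected (h : IsArc A a b) : IsPreconnected A := by
  obtain ⟨f, -, rfl⟩ := h
  exact isPreconnected_range f.continuous

lemma image {Y : Type*} [TopologicalSpace Y] (h : IsArc A a b) {φ : X → Y} (hφ : Continuous φ)
    (hinj : Function.Injective φ) : IsArc (φ '' A) (φ a) (φ b) := by
  obtain ⟨f, hf, rfl⟩ := h
  exact ⟨f.map hφ, hinj.comp hf, Set.range_comp φ f⟩

lemma hasAllContinuousLogs [T2Space X] (h : IsArc A a b) : HasAllContinuousLogs A := by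
  obtain ⟨f, hf, rfl⟩ := h
  exact .range (f.continuous.isClosedEmbedding hf).isEmbedding

lemma trans (hA : IsArc A a b) (hB : IsArc B b c) (hAB : A ∩ B ⊆ {b}) : IsArc (A ∪ B) a c := by
  obtain ⟨f, hf, rfl⟩ := hA
  obtain ⟨g, hg, rfl⟩ := hB
  refine ⟨f.trans g, ?_, f.trans_range g⟩
  have hcross {s t : unitInterval} (hst : f s = g t) : t = 0 := by
    have hgt : g t = b := hAB ⟨⟨s, hst⟩, ⟨t, rfl⟩⟩
    exact hg (hgt.trans g.source.symm)
  intro s t hst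
  simp only [Path.trans_apply] at hst
  split_ifs at hst with hs ht ht
  · have := congrArg Subtype.val (hf hst)
    exact Subtype.ext (by simpa using this)
  · have := congrArg Subtype.val (hcross hst)
    simp only [Set.Icc.coe_zero] at this
    linarith
  · have := congrArg Subtype.val (hcross hst.symm)
    simp only [Set.Icc.coe_zero] at this
    linarith
  · have := congrArg Subtype.val (hg hst)
    exact Subtype.ext (by simpa using this)

lemma image_Ioo {f : Path a b} (hf : Function.Injective f) :
    f '' Set.Ioo 0 1 = Set.range f \ {a, b} := by
  have ha (t) : f t = a ↔ t = 0 := by rw [← hf.eq_iff, f.source]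
  have hb (t) : f t = b ↔ t = 1 := by rw [← hf.eq_iff, f.target]
  have hmem (t) : t ∈ Set.Ioo 0 1 ↔ f t ∉ ({a, b} : Set X) := by
    simp [ha, hb, unitInterval.pos_iff_ne_zero, unitInterval.lt_one_iff_ne_one]
  ext z
  constructor
  · rintro ⟨t, ht, rfl⟩
    exact ⟨⟨t, rfl⟩, (hmem t).mp ht⟩
  · rintro ⟨⟨t, rfl⟩, ht⟩
    exact ⟨t, (hmem t).mpr ht, rfl⟩

lemma isPreconnected_diff (h : IsArc A a b) : IsPreconnected (A \ {a, b}) := by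
  obtain ⟨f, hf, rfl⟩ := h
  rw [← image_Ioo hf]
  exact isPreconnected_Ioo.image _ f.continuous.continuousOn

lemma subset_closure_diff (h : IsArc A a b) : A ⊆ closure (A \ {a, b}) := by
  obtain ⟨f, hf, rfl⟩ := h
  have hdense : (Set.univ : Set unitInterval) = closure (Set.Ioo 0 1) := by
    rw [closure_Ioo zero_ne_one]
    exact Set.Icc_bot_top.symm
  rw [← image_Ioo hf, ← Set.image_univ, hdense]
  exact image_closure_subset_closure_image f.continuous

lemma nonempty_diff (h : IsArc A a b) : (A \ {a, b}).Nonempty :=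
  closure_nonempty_iff.mp ⟨a, h.subset_closure_diff h.left_mem⟩

lemma exists_subarcs (h : IsArc A a b) {x : X} (hx : x ∈ A \ {a, b}) {U : Set X}
    (hU : U ∈ nhds x) :
    ∃ A₁ A₂ c d, IsArc A₁ a c ∧ IsArc A₂ d b ∧ Disjoint A₁ A₂ ∧ A₁ ∪ A₂ ⊆ A \ {x} ∧
      A \ (A₁ ∪ A₂) ⊆ U := by
  obtain ⟨f, hf, rfl⟩ := h
  rw [← image_Ioo hf] at hx
  obtain ⟨t, ⟨ht₀, ht₁⟩, rfl⟩ := hx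
  have hinj : Set.InjOn f.extend (Set.Icc 0 1) := fun r hr s hs hrs => by
    rw [f.extend_apply hr, f.extend_apply hs] at hrs
    exact congrArg Subtype.val (hf hrs)
  have hnhds : f.extend ⁻¹' U ∩ Set.Ioo 0 1 ∈ nhds (t : ℝ) := by
    refine Filter.inter_mem (f.continuous_extend.continuousAt ?_) (Ioo_mem_nhds ht₀ ht₁)
    rwa [f.extend_apply t.2]
  obtain ⟨l, u, ⟨hlt, htu⟩, hsub⟩ := mem_nhds_iff_exists_Ioo_subset.mp hnhds
  obtain ⟨l', hll', hl't⟩ := exists_between hlt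
  obtain ⟨u', htu', hu'u⟩ := exists_between htu
  have hl' : 0 < l' ∧ l' < 1 := (hsub ⟨hll', hl't.trans htu⟩).2
  have hu' : 0 < u' ∧ u' < 1 := (hsub ⟨hlt.trans htu', hu'u⟩).2
  have hsub₁ : Set.Icc 0 l' ⊆ Set.Icc 0 1 := Set.Icc_subset_Icc_right hl'.2.le
  have hsub₂ : Set.Icc u' 1 ⊆ Set.Icc 0 1 := Set.Icc_subset_Icc_left hu'.1.le
  refine ⟨f.extend '' Set.Icc 0 l', f.extend '' Set.Icc u' 1, f.extend l', f.extend u',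
    ?_, ?_, ?_, ?_, ?_⟩
  · simpa using isArc_image_Icc hl'.1 f.continuous_extend.continuousOn (hinj.mono hsub₁)
  · simpa using isArc_image_Icc hu'.2 f.continuous_extend.continuousOn (hinj.mono hsub₂)
  · refine Disjoint.image ?_ hinj hsub₁ hsub₂
    exact Set.disjoint_left.mpr fun r hr hr' => by linarith [hr.2, hr'.1]
  · rw [← Set.image_union]
    rintro _ ⟨r, hr, rfl⟩
    refine ⟨f.extend_range ▸ ⟨r, rfl⟩, fun hrt => ?_⟩
    rw [Set.mem_singleton_iff, ← f.extend_apply t.2] at hrt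
    have hrt' : r = t := hinj (Set.union_subset hsub₁ hsub₂ hr) t.2 hrt
    rcases hr with hr | hr
    · linarith [hr.2]
    · linarith [hr.1]
  · rintro _ ⟨⟨s, rfl⟩, hs⟩
    rw [← f.extend_apply s.2] at hs ⊢
    have hl's : l' < s := not_le.mp fun h => hs (Or.inl ⟨s, ⟨s.2.1, h⟩, rfl⟩)
    have hsu' : s < u' := not_le.mp fun h => hs (Or.inr ⟨s, ⟨h, s.2.2⟩, rfl⟩)
    exact (hsub ⟨hll'.trans hl's, hsu'.trans hu'u⟩).1

end IsArc
end Arcs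

/-! ### The Jordan curve theorem -/

section JordanCurve

/-- `J` is a simple closed curve, presented as the union of two arcs with common endpoints that
are otherwise disjoint. -/
def IsJordanCurve {X : Type*} [TopologicalSpace X] (J : Set X) : Prop :=
  ∃ A B a b, IsArc A a b ∧ IsArc B a b ∧ A ∩ B ⊆ {a, b} ∧ A ∪ B = J

section

variable {X : Type*} [TopologicalSpace X]

lemma IsJordanCurve.isCompact {J : Set X} (hJ : IsJordanCurve J) : IsCompact J := by
  obtain ⟨A, B, a, b, hA, hB, -, rfl⟩ := hJ
  exact hA.isCompact.union hB.isCompact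

lemma IsJordanCurve.image {Y : Type*} [TopologicalSpace Y] {J : Set X} (hJ : IsJordanCurve J)
    {φ : X → Y} (hφ : Continuous φ) (hinj : Function.Injective φ) : IsJordanCurve (φ '' J) := by
  obtain ⟨A, B, a, b, hA, hB, hAB, rfl⟩ := hJ
  refine ⟨φ '' A, φ '' B, φ a, φ b, hA.image hφ hinj, hB.image hφ hinj, ?_,
    (Set.image_union ..).symm⟩
  rw [← Set.image_inter hinj, ← Set.image_pair]
  exact Set.image_mono hAB

end

open Complex

/-- On `Aᶜ` and on `Bᶜ` the function `(z - b) / (z - a)` has a logarithm. If `(A ∪ B)ᶜ` were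
connected the two could be glued to a logarithm on a small circle around `b`. -/
lemma IsJordanCurve.not_isPreconnected_compl {J : Set ℂ} (hJ : IsJordanCurve J) :
    ¬IsPreconnected Jᶜ := by
  obtain ⟨A, B, a, b, hA, hB, hAB, rfl⟩ := hJ
  intro hconn
  have hlog {C : Set ℂ} (hC : IsArc C a b) :
      HasContinuousLogOn (fun z => (z - b) * (z - a)⁻¹) Cᶜ := by
    obtain ⟨f, -, rfl⟩ := hC
    exact hasContinuousLogOn_of_path f fun t ht => ht ⟨t, rfl⟩
  have hlog_union := (hlog hA).union (hlog hB) (by rwa [← Set.compl_union])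
    (Or.inl ⟨hA.isCompact.isClosed.isOpen_compl, hB.isCompact.isClosed.isOpen_compl⟩)
  have hab : 0 < dist a b := dist_pos.mpr hA.ne
  have hball : Metric.closedBall b (dist a b / 2) ⊆ {a}ᶜ := fun z hz e => by
    rw [Set.mem_singleton_iff.mp e, Metric.mem_closedBall] at hz
    linarith
  have hclosure : closure (Metric.ball b (dist a b / 2)) ⊆ {a}ᶜ :=
    Metric.closure_ball_subset_closedBall.trans hball
  have hne (z) (hz : z ∈ closure (Metric.ball b (dist a b / 2))) : z - a ≠ 0 :=
    sub_ne_zero.mpr (hclosure hz)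
  refine not_hasContinuousLogOn_frontier Metric.isOpen_ball Metric.isBounded_ball
    (Metric.mem_ball_self (half_pos hab)) one_ne_zero (g := fun z => (z - a)⁻¹)
    (ContinuousOn.inv₀ (by fun_prop) hne) (fun z hz => inv_ne_zero (hne z hz)) ?_
  simp only [zpow_one]
  refine hlog_union.mono fun z hz => ?_
  rw [← Set.compl_inter]
  intro hzAB
  rcases hAB hzAB with rfl | rfl
  · exact hclosure hz.1 rfl
  · exact hz.2 (by
      rw [Metric.isOpen_ball.interior_eq]
      exact Metric.mem_ball_self (half_pos hab))

lemma IsJordanCurve.exists_notMem_connectedComponentIn {J : Set ℂ} (hJ : IsJordanCurve J) (p : ℂ) :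
    ∃ q ∉ J, p ∉ connectedComponentIn Jᶜ q := by
  by_contra! hcon
  exact hJ.not_isPreconnected_compl <| isPreconnected_of_forall_connectedComponentIn_eq
    fun q hq r hr => (connectedComponentIn_eq (hcon q hq)).trans
      (connectedComponentIn_eq (hcon r hr)).symm

lemma IsArc.hasAllContinuousLogs_union {X : Type*} [TopologicalSpace X] [T2Space X]
    {A₁ B A₂ : Set X} {a b c d : X} (hA₁ : IsArc A₁ a c) (hB : IsArc B a b) (hA₂ : IsArc A₂ d b)
    (hdisj : Disjoint A₁ A₂) (hinter : (A₁ ∪ A₂) ∩ B ⊆ {a, b}) :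
    HasAllContinuousLogs (A₁ ∪ A₂ ∪ B) := by
  have hA₁B : A₁ ∩ B ⊆ {a} := fun z hz => (hinter ⟨Or.inl hz.1, hz.2⟩).resolve_right fun hzb =>
    Set.disjoint_left.mp hdisj hz.1 ((Set.mem_singleton_iff.mp hzb).symm ▸ hA₂.right_mem)
  have hBA₂ : (A₁ ∪ B) ∩ A₂ ⊆ {b} := by
    rintro z ⟨hzA₁ | hzB, hzA₂⟩
    · exact (Set.disjoint_left.mp hdisj hzA₁ hzA₂).elim
    · refine (hinter ⟨Or.inr hzA₂, hzB⟩).resolve_left ?_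
      rintro rfl
      exact Set.disjoint_left.mp hdisj hA₁.left_mem hzA₂
  rw [Set.union_right_comm]
  exact (hA₁.hasAllContinuousLogs.union hB.hasAllContinuousLogs hA₁.isCompact.isClosed
    hB.isCompact.isClosed (Set.subsingleton_singleton.anti hA₁B).isPreconnected).union
    hA₂.hasAllContinuousLogs (hA₁.isCompact.union hB.isCompact).isClosed hA₂.isCompact.isClosed
    (Set.subsingleton_singleton.anti hBA₂).isPreconnected

/-- Removing a short piece of `A` around `x` leaves two subarcs of `A` which together with `B` form
an arc, so a point of `A` seen only from far away would be joined to `p` off that arc. -/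
lemma IsArc.subset_closure_connectedComponentIn {A B : Set ℂ} {a b : ℂ} (hA : IsArc A a b)
    (hB : IsArc B a b) (hAB : A ∩ B ⊆ {a, b}) {p : ℂ} (hp : p ∉ A ∪ B) :
    A ⊆ closure (connectedComponentIn (A ∪ B)ᶜ p) := by
  set D := connectedComponentIn (A ∪ B)ᶜ p
  refine hA.subset_closure_diff.trans (closure_minimal (fun x hx => ?_) isClosed_closure)
  by_contra hxD
  obtain ⟨A₁, A₂, c, d, hA₁, hA₂, hdisj, hsub, hgap⟩ :=
    hA.exists_subarcs hx (isClosed_closure.isOpen_compl.mem_nhds hxD)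
  have hsubA : A₁ ∪ A₂ ⊆ A := hsub.trans Set.sdiff_subset
  have hJo : IsOpen (A ∪ B)ᶜ := (hA.isCompact.union hB.isCompact).isClosed.isOpen_compl
  have hcover : (A₁ ∪ A₂ ∪ B)ᶜ ⊆ D ∪ (closure D)ᶜ := fun z hz => by
    by_contra hzD
    simp only [Set.mem_union, Set.mem_compl_iff, not_or, not_not] at hz hzD
    refine hzD.1 (mem_connectedComponentIn_of_mem_closure hJo hzD.2 ?_)
    rintro (hzA | hzB)
    · exact hgap ⟨hzA, fun h => h.elim hz.1.1 hz.1.2⟩ hzD.2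
    · exact hz.2 hzB
  have hpK : p ∈ (A₁ ∪ A₂ ∪ B)ᶜ := fun h => hp (Set.union_subset_union_left B hsubA h)
  have hxK : x ∈ (A₁ ∪ A₂ ∪ B)ᶜ := by
    rintro (hxA | hxB)
    · exact (hsub hxA).2 rfl
    · exact hx.2 (hAB ⟨hx.1, hxB⟩)
  have hconn : IsPreconnected (A₁ ∪ A₂ ∪ B)ᶜ := by
    refine (hA₁.hasAllContinuousLogs_union hB hA₂ hdisj ?_).isPreconnected_compl
      ((hA₁.isCompact.union hA₂.isCompact).union hB.isCompact)
    exact (Set.inter_subset_inter_left B hsubA).trans hAB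
  obtain ⟨z, -, hzD, hzD'⟩ := hconn D (closure D)ᶜ
    hJo.connectedComponentIn isClosed_closure.isOpen_compl hcover
    ⟨p, hpK, mem_connectedComponentIn hp⟩ ⟨x, hxK, hxD⟩
  exact hzD' (subset_closure hzD)

lemma IsJordanCurve.subset_closure_connectedComponentIn {J : Set ℂ} (hJ : IsJordanCurve J) {p : ℂ}
    (hp : p ∉ J) : J ⊆ closure (connectedComponentIn Jᶜ p) := by
  obtain ⟨A, B, a, b, hA, hB, hAB, rfl⟩ := hJ
  refine Set.union_subset (hA.subset_closure_connectedComponentIn hB hAB hp) ?_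
  rw [Set.union_comm] at hp ⊢
  exact hB.subset_closure_connectedComponentIn hA (Set.inter_comm A B ▸ hAB) hp

/-- Logarithms of `f` along two arcs from `a` to `b`, chosen to agree at `a`, differ at `b` by the
winding number of `f`. -/
lemma HasAllContinuousLogs.exists_log_pair {X : Type*} [TopologicalSpace X] {A B : Set X}
    (hA : HasAllContinuousLogs A) (hB : HasAllContinuousLogs B) {a b : X} (ha : a ∈ A ∩ B)
    (hb : b ∈ A ∩ B) {f : X → ℂ} (hf : ContinuousOn f (A ∪ B)) (hf₀ : ∀ z ∈ A ∪ B, f z ≠ 0) :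
    ∃ (l l' : X → ℂ) (k : ℤ), ContinuousOn l A ∧ (∀ z ∈ A, exp (l z) = f z) ∧
      ContinuousOn l' B ∧ (∀ z ∈ B, exp (l' z) = f z) ∧ l a = l' a ∧
      l b = l' b + k * (2 * Real.pi * I) := by
  obtain ⟨l, hl, hexp⟩ := hA f (hf.mono Set.subset_union_left) fun z hz => hf₀ z (Or.inl hz)
  obtain ⟨l', hl', hexp'⟩ := hB f (hf.mono Set.subset_union_right) fun z hz => hf₀ z (Or.inr hz)
  obtain ⟨α, hα⟩ := exp_eq_exp_iff_exists_int.mp ((hexp a ha.1).trans (hexp' a ha.2).symm)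
  obtain ⟨β, hβ⟩ := exp_eq_exp_iff_exists_int.mp ((hexp b hb.1).trans (hexp' b hb.2).symm)
  refine ⟨l, fun z => l' z + α * (2 * Real.pi * I), β - α, hl, hexp, by fun_prop, fun z hz => ?_,
    hα, ?_⟩
  · rw [exp_add, exp_int_mul_two_pi_mul_I, mul_one, hexp' z hz]
  · rw [hβ]
    push_cast
    ring

/-- Winding numbers are integers, so those of `f` and `g` are linearly dependent. -/
lemma IsJordanCurve.exists_hasContinuousLogOn_zpow_mul_zpow {X : Type*} [TopologicalSpace X]
    [T2Space X] {J : Set X} (hJ : IsJordanCurve J) {f g : X → ℂ} (hf : ContinuousOn f J)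
    (hf₀ : ∀ z ∈ J, f z ≠ 0) (hg : ContinuousOn g J) (hg₀ : ∀ z ∈ J, g z ≠ 0) :
    ∃ m n : ℤ, (m ≠ 0 ∨ n ≠ 0) ∧ HasContinuousLogOn (fun z => f z ^ m * g z ^ n) J := by
  obtain ⟨A, B, a, b, hA, hB, hAB, rfl⟩ := hJ
  have ha : a ∈ A ∩ B := ⟨hA.left_mem, hB.left_mem⟩
  have hb : b ∈ A ∩ B := ⟨hA.right_mem, hB.right_mem⟩
  obtain ⟨l, l', k, hl, hexp, hl', hexp', hla, hlb⟩ :=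
    hA.hasAllContinuousLogs.exists_log_pair hB.hasAllContinuousLogs ha hb hf hf₀
  obtain ⟨r, r', j, hr, hexpr, hr', hexpr', hra, hrb⟩ :=
    hA.hasAllContinuousLogs.exists_log_pair hB.hasAllContinuousLogs ha hb hg hg₀
  obtain ⟨m, n, hmn, hrel⟩ : ∃ m n : ℤ, (m ≠ 0 ∨ n ≠ 0) ∧ m * k + n * j = 0 := by
    by_cases hk : k = 0
    · exact ⟨1, 0, Or.inl one_ne_zero, by simp [hk]⟩
    · exact ⟨-j, k, Or.inr hk, by ring⟩
  refine ⟨m, n, hmn, .of_eqOn_inter (l := fun z => m * l z + n * r z)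
    (l' := fun z => m * l' z + n * r' z) (by fun_prop) (fun z hz => ?_) (by fun_prop)
    (fun z hz => ?_) (fun z hz => ?_) (Or.inr ⟨hA.isCompact.isClosed, hB.isCompact.isClosed⟩)⟩
  · rw [exp_add, exp_int_mul, exp_int_mul, hexp z hz, hexpr z hz]
  · rw [exp_add, exp_int_mul, exp_int_mul, hexp' z hz, hexpr' z hz]
  · rcases hAB hz with rfl | rfl
    · simp only [hla, hra]
    · have hrel' : (m * k + n * j : ℂ) = 0 := mod_cast hrel
      simp only [hlb, hrb]
      linear_combination (2 * Real.pi * I) * hrel'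

lemma IsJordanCurve.connectedComponentIn_eq_of_isBounded {J : Set ℂ} (hJ : IsJordanCurve J)
    {p q : ℂ} (hp : p ∉ J) (hq : q ∉ J) (hbp : Bornology.IsBounded (connectedComponentIn Jᶜ p))
    (hbq : Bornology.IsBounded (connectedComponentIn Jᶜ q)) :
    connectedComponentIn Jᶜ p = connectedComponentIn Jᶜ q := by
  by_contra hne
  have hJc : IsClosed J := hJ.isCompact.isClosed
  have hfar {x y : ℂ} (hx : x ∉ J) (hxy : connectedComponentIn Jᶜ x ≠ connectedComponentIn Jᶜ y)
      (z) (hz : z ∈ closure (connectedComponentIn Jᶜ y)) : z - x ≠ 0 := sub_ne_zero.mpr fun e =>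
    hxy (connectedComponentIn_eq
      (mem_connectedComponentIn_of_mem_closure hJc.isOpen_compl (e ▸ hz) hx)).symm
  have hnolog {x y : ℂ} (hx : x ∉ J) (hy : y ∉ J)
      (hxy : connectedComponentIn Jᶜ x ≠ connectedComponentIn Jᶜ y)
      (hb : Bornology.IsBounded (connectedComponentIn Jᶜ y)) {m : ℤ} (hm : m ≠ 0) (n : ℤ) :
      ¬HasContinuousLogOn (fun z => (z - y) ^ m * (z - x) ^ n) J := fun hlog =>
    not_hasContinuousLogOn_frontier hJc.isOpen_compl.connectedComponentIn hb
      (mem_connectedComponentIn hy) hm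
      (ContinuousOn.zpow₀ (by fun_prop) n fun z hz => Or.inl (hfar hx hxy z hz))
      (fun z hz => zpow_ne_zero _ (hfar hx hxy z hz))
      (hlog.mono (frontier_connectedComponentIn_compl_subset hJc y))
  have hne_zero {x : ℂ} (hx : x ∉ J) (z) (hz : z ∈ J) : z - x ≠ 0 :=
    sub_ne_zero.mpr fun e => hx (e ▸ hz)
  obtain ⟨m, n, hm | hn, hlog⟩ := hJ.exists_hasContinuousLogOn_zpow_mul_zpow
    (f := fun z => z - p) (g := fun z => z - q) (by fun_prop) (hne_zero hp) (by fun_prop)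
    (hne_zero hq)
  · exact hnolog hq hp (Ne.symm hne) hbp hm n hlog
  · exact hnolog hp hq hne hbq hn m (hlog.congr fun z _ => mul_comm _ _)

lemma IsJordanCurve.connectedComponentIn_eq_or_eq_or_eq {J : Set ℂ} (hJ : IsJordanCurve J)
    {p q r : ℂ} (hp : p ∉ J) (hq : q ∉ J) (hr : r ∉ J) :
    connectedComponentIn Jᶜ p = connectedComponentIn Jᶜ q ∨
      connectedComponentIn Jᶜ p = connectedComponentIn Jᶜ r ∨
        connectedComponentIn Jᶜ q = connectedComponentIn Jᶜ r := by
  have hbounded {x y : ℂ} (hx : x ∉ J) (hy : y ∉ J) := hJ.connectedComponentIn_eq_of_isBounded hx hy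
  have hunbounded {x y : ℂ} := connectedComponentIn_compl_eq_of_not_isBounded (p := x) (q := y)
    (by simp) hJ.isCompact.isBounded
  by_cases hbp : Bornology.IsBounded (connectedComponentIn Jᶜ p) <;>
    by_cases hbq : Bornology.IsBounded (connectedComponentIn Jᶜ q) <;>
      by_cases hbr : Bornology.IsBounded (connectedComponentIn Jᶜ r)
  all_goals first
    | exact Or.inl (hbounded hp hq hbp hbq)
    | exact Or.inl (hunbounded hbp hbq)
    | exact Or.inr (Or.inl (hbounded hp hr hbp hbr))
    | exact Or.inr (Or.inl (hunbounded hbp hbr))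
    | exact Or.inr (Or.inr (hbounded hq hr hbq hbr))
    | exact Or.inr (Or.inr (hunbounded hbq hbr))

end JordanCurve

/-! ### Theta graphs in the plane -/

section Theta

/-- If the component `E` of `q` off `A ∪ B` misses `C`, then `E` and the interior of `B` lie on one
side of `A ∪ C`. -/
lemma connectedComponentIn_compl_union_eq_of_theta {A B C : Set ℂ} {a b p q : ℂ}
    (hA : IsArc A a b) (hB : IsArc B a b) (hAB : A ∩ B ⊆ {a, b}) (hBC : B ∩ C ⊆ {a, b})
    (hC : {a, b} ⊆ C) (hq : q ∉ A ∪ B)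
    (hqC : Disjoint (connectedComponentIn (A ∪ B)ᶜ q) C)
    (hpB : ¬Disjoint B (connectedComponentIn (A ∪ C)ᶜ p)) :
    connectedComponentIn (A ∪ C)ᶜ p = connectedComponentIn (A ∪ C)ᶜ q := by
  set E := connectedComponentIn (A ∪ B)ᶜ q
  obtain ⟨z, hzB, hz⟩ := Set.not_disjoint_iff.mp hpB
  have hzAC : z ∉ A ∪ C := connectedComponentIn_subset _ _ hz
  have hBE : B ⊆ closure E := by
    have h := hB.subset_closure_connectedComponentIn hA (Set.inter_comm A B ▸ hAB)
      (Set.union_comm A B ▸ hq)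
    rwa [Set.union_comm B A] at h
  have hconn : IsPreconnected (E ∪ B \ {a, b}) :=
    isPreconnected_connectedComponentIn.subset_closure Set.subset_union_left
      (Set.union_subset subset_closure (Set.sdiff_subset.trans hBE))
  have hsub : E ∪ B \ {a, b} ⊆ (A ∪ C)ᶜ := by
    rintro y (hy | ⟨hyB, hy⟩) (hyA | hyC)
    · exact connectedComponentIn_subset _ _ hy (Or.inl hyA)
    · exact Set.disjoint_left.mp hqC hy hyC
    · exact hy (hAB ⟨hyA, hyB⟩)
    · exact hy (hBC ⟨hyB, hyC⟩)
  have hzq := hconn.subset_connectedComponentIn (Or.inl (mem_connectedComponentIn hq)) hsub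
    (Or.inr ⟨hzB, fun h => hzAC (Or.inr (hC h))⟩)
  rw [connectedComponentIn_eq hz, connectedComponentIn_eq hzq]

/-- Otherwise take `q` on the side of `A ∪ B` away from `C`: neither `A ∪ C` nor `B ∪ C` separates
`p` from `q`, hence by Janiszewski's theorem neither does their union. -/
theorem disjoint_connectedComponentIn_of_theta {A B C : Set ℂ} {a b : ℂ} (hA : IsArc A a b)
    (hB : IsArc B a b) (hC : IsArc C a b) (hAB : A ∩ B ⊆ {a, b}) (hAC : A ∩ C ⊆ {a, b})
    (hBC : B ∩ C ⊆ {a, b}) {p : ℂ} (hp : p ∉ A ∪ B ∪ C) :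
    Disjoint C (connectedComponentIn (A ∪ B)ᶜ p) ∨ Disjoint B (connectedComponentIn (A ∪ C)ᶜ p) ∨
      Disjoint A (connectedComponentIn (B ∪ C)ᶜ p) := by
  by_contra! ⟨hpC, hpB, hpA⟩
  obtain ⟨z, hzC, hz⟩ := Set.not_disjoint_iff.mp hpC
  have hzAB : z ∉ A ∪ B := connectedComponentIn_subset _ _ hz
  have hendsC : {a, b} ⊆ C := Set.pair_subset hC.left_mem hC.right_mem
  obtain ⟨q, hq, hzq⟩ := (show IsJordanCurve (A ∪ B) from
    ⟨A, B, a, b, hA, hB, hAB, rfl⟩).exists_notMem_connectedComponentIn z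
  have hCsub : C \ {a, b} ⊆ (A ∪ B)ᶜ := by
    rintro y ⟨hyC, hy⟩ (hyA | hyB)
    · exact hy (hAC ⟨hyA, hyC⟩)
    · exact hy (hBC ⟨hyB, hyC⟩)
  have hends {y : ℂ} (hy : y ∉ A ∪ B) : y ∉ ({a, b} : Set ℂ) := fun h =>
    hy (Or.inl (Set.pair_subset hA.left_mem hA.right_mem h))
  have hqC : Disjoint (connectedComponentIn (A ∪ B)ᶜ q) C := by
    refine Set.disjoint_left.mpr fun y hy hyC => ?_
    have hyAB : y ∉ A ∪ B := connectedComponentIn_subset _ _ hy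
    rw [connectedComponentIn_eq hy] at hzq
    exact hzq (hC.isPreconnected_diff.subset_connectedComponentIn ⟨hyC, hends hyAB⟩ hCsub
      ⟨hzC, hends hzAB⟩)
  have hqABC : q ∉ A ∪ C ∪ (B ∪ C) := by
    have := Set.disjoint_left.mp hqC (mem_connectedComponentIn hq)
    grind
  have hpABC : p ∉ A ∪ C ∪ (B ∪ C) := by grind
  have hinter : (A ∪ C) ∩ (B ∪ C) = C := by
    rw [← Set.inter_union_distrib_right, Set.union_eq_right.mpr (hAB.trans hendsC)]
  have hpq := connectedComponentIn_compl_union_eq (hA.isCompact.union hC.isCompact)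
    (hB.isCompact.union hC.isCompact) (hinter.symm ▸ hC.isPreconnected) hpABC hqABC
    (connectedComponentIn_compl_union_eq_of_theta hA hB hAB hBC hendsC hq hqC hpB)
    (connectedComponentIn_compl_union_eq_of_theta hB hA (Set.inter_comm A B ▸ hAB) hAC hendsC
      (Set.union_comm A B ▸ hq) (Set.union_comm A B ▸ hqC) hpA)
  have hqp : q ∈ connectedComponentIn (A ∪ B)ᶜ p :=
    connectedComponentIn_mono p (Set.compl_subset_compl.mpr (Set.union_subset_union
      Set.subset_union_left Set.subset_union_left)) (by
        rw [hpq]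
        exact mem_connectedComponentIn hqABC)
  exact hzq (connectedComponentIn_eq hqp ▸ hz)

end Theta

/-! ### The Jordan curve theorem in the real plane -/

section RealPlane

lemma image_connectedComponentIn_compl {X Y : Type*} [TopologicalSpace X] [TopologicalSpace Y]
    (φ : X ≃ₜ Y) {J : Set X} {p : X} (hp : p ∉ J) :
    φ '' connectedComponentIn Jᶜ p = connectedComponentIn (φ '' J)ᶜ (φ p) := by
  rw [φ.image_connectedComponentIn hp, Set.image_compl_eq φ.bijective]

/-- The identification of the real plane with `ℂ`. -/
noncomputable abbrev realPlaneHomeo : ℝ × ℝ ≃ₜ ℂ := Complex.equivRealProdCLM.symm.toHomeomorph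

variable {J : Set (ℝ × ℝ)}

lemma notMem_image_realPlaneHomeo {p : ℝ × ℝ} (hp : p ∉ J) :
    realPlaneHomeo p ∉ realPlaneHomeo '' J := by
  rwa [realPlaneHomeo.injective.mem_set_image]

lemma IsJordanCurve.image_realPlaneHomeo (hJ : IsJordanCurve J) :
    IsJordanCurve (realPlaneHomeo '' J) :=
  hJ.image realPlaneHomeo.continuous realPlaneHomeo.injective

theorem IsJordanCurve.exists_notMem_connectedComponentIn_prod (hJ : IsJordanCurve J) (p : ℝ × ℝ) :
    ∃ q ∉ J, p ∉ connectedComponentIn Jᶜ q := by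
  obtain ⟨q, hq, hpq⟩ := hJ.image_realPlaneHomeo.exists_notMem_connectedComponentIn
    (realPlaneHomeo p)
  obtain ⟨q, rfl⟩ := realPlaneHomeo.surjective q
  rw [realPlaneHomeo.injective.mem_set_image] at hq
  rw [← image_connectedComponentIn_compl _ hq, realPlaneHomeo.injective.mem_set_image] at hpq
  exact ⟨q, hq, hpq⟩

theorem IsJordanCurve.connectedComponentIn_eq_or_eq_or_eq_prod (hJ : IsJordanCurve J)
    {p q r : ℝ × ℝ} (hp : p ∉ J) (hq : q ∉ J) (hr : r ∉ J) :
    connectedComponentIn Jᶜ p = connectedComponentIn Jᶜ q ∨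
      connectedComponentIn Jᶜ p = connectedComponentIn Jᶜ r ∨
        connectedComponentIn Jᶜ q = connectedComponentIn Jᶜ r := by
  have h := hJ.image_realPlaneHomeo.connectedComponentIn_eq_or_eq_or_eq
    (notMem_image_realPlaneHomeo hp) (notMem_image_realPlaneHomeo hq)
    (notMem_image_realPlaneHomeo hr)
  simpa only [← image_connectedComponentIn_compl _ hp, ← image_connectedComponentIn_compl _ hq,
    ← image_connectedComponentIn_compl _ hr,
    realPlaneHomeo.injective.image_injective.eq_iff] using h

theorem IsJordanCurve.subset_closure_connectedComponentIn_prod (hJ : IsJordanCurve J) {p : ℝ × ℝ}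
    (hp : p ∉ J) : J ⊆ closure (connectedComponentIn Jᶜ p) := by
  have h := hJ.image_realPlaneHomeo.subset_closure_connectedComponentIn
    (notMem_image_realPlaneHomeo hp)
  rwa [← image_connectedComponentIn_compl _ hp, ← realPlaneHomeo.image_closure,
    Set.image_subset_image_iff realPlaneHomeo.injective] at h

theorem disjoint_connectedComponentIn_of_theta_prod {A B C : Set (ℝ × ℝ)} {a b : ℝ × ℝ}
    (hA : IsArc A a b) (hB : IsArc B a b) (hC : IsArc C a b) (hAB : A ∩ B ⊆ {a, b})
    (hAC : A ∩ C ⊆ {a, b}) (hBC : B ∩ C ⊆ {a, b}) {p : ℝ × ℝ} (hp : p ∉ A ∪ B ∪ C) :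
    Disjoint C (connectedComponentIn (A ∪ B)ᶜ p) ∨ Disjoint B (connectedComponentIn (A ∪ C)ᶜ p) ∨
      Disjoint A (connectedComponentIn (B ∪ C)ᶜ p) := by
  have himage {D : Set (ℝ × ℝ)} (hD : IsArc D a b) :=
    hD.image realPlaneHomeo.continuous realPlaneHomeo.injective
  have hends {D E : Set (ℝ × ℝ)} (hDE : D ∩ E ⊆ {a, b}) :
      realPlaneHomeo '' D ∩ realPlaneHomeo '' E ⊆ {realPlaneHomeo a, realPlaneHomeo b} := by
    rw [← Set.image_inter realPlaneHomeo.injective, ← Set.image_pair]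
    exact Set.image_mono hDE
  have h := disjoint_connectedComponentIn_of_theta (himage hA) (himage hB) (himage hC) (hends hAB)
    (hends hAC) (hends hBC) (p := realPlaneHomeo p) (by
      simpa only [← Set.image_union] using notMem_image_realPlaneHomeo hp)
  simpa only [← Set.image_union, ← image_connectedComponentIn_compl _
    (show p ∉ A ∪ B from fun hpAB => hp (Or.inl hpAB)), ← image_connectedComponentIn_compl _
    (show p ∉ A ∪ C by grind), ← image_connectedComponentIn_compl _ (show p ∉ B ∪ C by grind),
    Set.disjoint_image_iff realPlaneHomeo.injective] using h

end RealPlane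

/-! ### Menger's theorem -/

section Menger

variable {V : Type*} {G G' : SimpleGraph V} {A B s t U : Set V} {u v x y : V}

/-- The vertices which can be reached from `A` by a walk all of whose vertices, the first one
included, lie in `s`. -/
def reachSet (G : SimpleGraph V) (s A : Set V) : Set V :=
  {v | ∃ a ∈ A, ∃ p : G.Walk a v, ∀ w ∈ p.support, w ∈ s}

lemma reachSet_subset : reachSet G s A ⊆ s := fun _ ⟨_, _, p, hp⟩ => hp _ p.end_mem_support

lemma mem_reachSet_of_mem (hA : v ∈ A) (hs : v ∈ s) : v ∈ reachSet G s A :=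
  ⟨v, hA, .nil, by simpa using hs⟩

lemma mem_reachSet_of_walk (hu : u ∈ reachSet G s A) (p : G.Walk u v)
    (hp : ∀ w ∈ p.support, w ∈ s) : v ∈ reachSet G s A := by
  obtain ⟨a, ha, q, hq⟩ := hu
  refine ⟨a, ha, q.append p, fun w hw => ?_⟩
  exact ((Walk.mem_support_append_iff q p).mp hw).elim (hq w) (hp w)

lemma mem_reachSet_of_adj (hu : u ∈ reachSet G s A) (huv : G.Adj u v) (hv : v ∈ s) :
    v ∈ reachSet G s A :=
  mem_reachSet_of_walk hu (.cons huv .nil) (by simpa using ⟨reachSet_subset hu, hv⟩)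

lemma reachSet_subset_of_closed (hA : A ∩ s ⊆ U)
    (hU : ∀ u ∈ U, ∀ v ∈ s, G.Adj u v → v ∈ U) : reachSet G s A ⊆ U := by
  rintro v ⟨a, ha, p, hp⟩
  have haU : a ∈ U := hA ⟨ha, hp a p.start_mem_support⟩
  by_contra hvU
  obtain ⟨d, hd, hdU, hdU'⟩ := p.exists_boundary_dart U haU hvU
  exact hdU' (hU _ hdU _ (hp _ (p.dart_snd_mem_support_of_mem_darts hd)) d.adj)

lemma reachSet_mono (hG : G ≤ G') (hst : s ⊆ t) : reachSet G s A ⊆ reachSet G' t A :=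
  reachSet_subset_of_closed (fun _ ha => mem_reachSet_of_mem ha.1 (hst ha.2))
    fun _ hu _ hv huv => mem_reachSet_of_adj hu (hG huv) (hst hv)

lemma reachSet_subset_reachSet_self : reachSet G s A ⊆ reachSet G (reachSet G s A) A := by
  refine reachSet_subset_of_closed
    (fun a ha => mem_reachSet_of_mem ha.1 (mem_reachSet_of_mem ha.1 ha.2)) fun u hu v hv huv => ?_
  exact mem_reachSet_of_adj hu huv (mem_reachSet_of_adj (reachSet_subset hu) huv hv)

lemma reachSet_inter_nonempty_symm (h : (reachSet G s A ∩ B).Nonempty) :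
    (reachSet G s B ∩ A).Nonempty := by
  obtain ⟨b, ⟨a, ha, p, hp⟩, hb⟩ := h
  exact ⟨a, ⟨b, hb, p.reverse, by simpa using hp⟩, ha⟩

lemma disjoint_reachSet_iff :
    Disjoint (reachSet G s A) (reachSet G s B) ↔ Disjoint (reachSet G s A) B := by
  simp only [Set.disjoint_left]
  refine ⟨fun h v hv hvB => h hv (mem_reachSet_of_mem hvB (reachSet_subset hv)), ?_⟩
  rintro h v hv ⟨b, hb, p, hp⟩
  exact h (mem_reachSet_of_walk hv p.reverse (by simpa using hp)) hb

lemma exists_mem_reachSet_insert (h : (reachSet G s A ∩ t).Nonempty) :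
    ∃ v ∈ s ∩ t, v ∈ reachSet G (insert v (reachSet G (s \ t) A)) A := by
  set R := reachSet G (s \ t) A
  by_contra! hcon
  obtain ⟨w, hw, hwt⟩ := h
  refine (reachSet_subset (reachSet_subset_of_closed (U := R) ?_ ?_ hw)).2 hwt
  · rintro a ⟨ha, has⟩
    by_cases hat : a ∈ t
    · exact (hcon a ⟨has, hat⟩ (mem_reachSet_of_mem ha (Set.mem_insert a R))).elim
    · exact mem_reachSet_of_mem ha ⟨has, hat⟩
  · intro u hu v hv huv
    by_cases hvt : v ∈ t
    · exact (hcon v ⟨hv, hvt⟩ (mem_reachSet_of_adj (reachSet_mono le_rfl (Set.subset_insert v R)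
        (reachSet_subset_reachSet_self hu)) huv (Set.mem_insert v R))).elim
    · exact mem_reachSet_of_adj hu huv ⟨hv, hvt⟩

/-- A family of disjoint vertex sets each of which carries a walk from `A` to `B`; choosing these
walks is the same as choosing disjoint `A`–`B` paths. -/
structure IsLinkage {ι : Type*} (G : SimpleGraph V) (A B : Set V) (Q : ι → Set V) : Prop where
  disjoint : Pairwise (Function.onFun Disjoint Q)
  nonempty (i : ι) : (reachSet G (Q i) A ∩ B).Nonempty

namespace IsLinkage

variable {ι : Type*} {Q : ι → Set V}

lemma mono (h : IsLinkage G' A B Q) (hG : G' ≤ G) : IsLinkage G A B Q :=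
  ⟨h.disjoint, fun i => (h.nonempty i).mono (Set.inter_subset_inter_left _
    (reachSet_mono hG subset_rfl))⟩

/-- Cut every path of a linkage from `A` to `range t` at its first vertex in `range t`. -/
lemma exists_trim [Finite ι] {t : ι → V} (h : IsLinkage G A (Set.range t) Q) :
    ∃ R : ι → Set V, Pairwise (Function.onFun Disjoint R) ∧
      ∀ i, t i ∈ reachSet G (R i) A ∧ R i ⊆ insert (t i) (reachSet G (Set.range t)ᶜ A) := by
  choose e he ht using fun i => exists_mem_reachSet_insert (h.nonempty i)
  choose σ hσ using fun i => (he i).2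
  have hσ_inj : Function.Injective σ := fun i j hij => by
    by_contra hne
    exact Set.disjoint_left.mp (h.disjoint hne) (he i).1
      (by rw [← hσ i, hij, hσ j]; exact (he j).1)
  obtain ⟨τ, hτ⟩ := (Finite.injective_iff_surjective.mp hσ_inj).hasRightInverse
  have hsub (i) : insert (e i) (reachSet G (Q i \ Set.range t) A) ⊆ Q i :=
    Set.insert_subset (he i).1 (reachSet_subset.trans Set.sdiff_subset)
  have heτ (i) : e (τ i) = t i := by rw [← hσ, hτ]
  refine ⟨fun i => insert (e (τ i)) (reachSet G (Q (τ i) \ Set.range t) A), fun i j hij => ?_,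
    fun i => ⟨?_, ?_⟩⟩
  · exact (h.disjoint (hτ.injective.ne hij)).mono (hsub _) (hsub _)
  · rw [← heτ]
    exact ht (τ i)
  · simp only [heτ]
    exact Set.insert_subset_insert (reachSet_mono le_rfl fun v hv => hv.2)

end IsLinkage

/-- No set of fewer than `k` vertices separates `A` from `B`. -/
def NoSmallSeparator (G : SimpleGraph V) (A B : Set V) (k : ℕ) : Prop :=
  ∀ X : Finset V, X.card < k → (reachSet G (X : Set V)ᶜ A ∩ B).Nonempty

lemma NoSmallSeparator.symm {k : ℕ} (h : NoSmallSeparator G A B k) : NoSmallSeparator G B A k :=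
  fun X hX => reachSet_inter_nonempty_symm (h X hX)

lemma NoSmallSeparator.exists_isLinkage_of_bot [Finite V] {k : ℕ}
    (h : NoSmallSeparator (⊥ : SimpleGraph V) A B k) :
    ∃ Q : Fin k → Set V, IsLinkage ⊥ A B Q := by
  have hk : k ≤ (A ∩ B).ncard := by
    by_contra! hlt
    obtain ⟨X, hX⟩ := (A ∩ B).toFinite.exists_finset_coe
    obtain ⟨b, hb, hbB⟩ := h X (by rwa [← Set.ncard_coe_finset, hX])
    have hbA : b ∈ A \ X := reachSet_subset_of_closed (U := A \ X) (fun a ha => ha)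
      (fun _ _ _ _ huv => (bot_adj _ _ |>.mp huv).elim) hb
    exact hbA.2 (hX ▸ ⟨hbA.1, hbB⟩)
  obtain ⟨T, hT, rfl⟩ := Set.exists_subset_card_eq hk
  obtain ⟨X, rfl⟩ := T.toFinite.exists_finset_coe
  rw [Set.ncard_coe_finset]
  refine ⟨fun i => {(X.equivFin.symm i : V)}, fun i j hij => ?_, fun i => ⟨X.equivFin.symm i, ?_⟩⟩
  · exact Set.disjoint_singleton.mpr fun e => hij (X.equivFin.symm.injective (Subtype.ext e))
  · have hi := hT (X.equivFin.symm i).2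
    exact ⟨mem_reachSet_of_mem hi.1 rfl, hi.2⟩

/-- If `S` separates `A` from `B` after the deletion of the edge `x y`, and `x` lies on the side of
`A`, then a set separating `A` from `S ∪ {x}` after the deletion separates `A` from `B`. -/
lemma NoSmallSeparator.insert_left {k : ℕ} {S : Set V} (h : NoSmallSeparator G A B k)
    (hG : ∀ u v, G.Adj u v → ¬G'.Adj u v → s(u, v) = s(x, y))
    (hS : Disjoint (reachSet G' Sᶜ A) B) (hy : y ∉ reachSet G' Sᶜ A) :
    NoSmallSeparator G' A (insert x S) k := by
  intro Z hZ
  by_contra! hempty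
  have hdisj (v) (hv : v ∈ reachSet G' (Z : Set V)ᶜ A) : v ∉ insert x S := fun hvT =>
    Set.eq_empty_iff_forall_notMem.mp hempty v ⟨hv, hvT⟩
  have hsub : reachSet G' (Z : Set V)ᶜ A ⊆ reachSet G' Sᶜ A :=
    reachSet_subset_reachSet_self.trans
      (reachSet_mono le_rfl fun v hv hvS => hdisj v hv (Set.mem_insert_of_mem x hvS))
  have hclosed : reachSet G (Z : Set V)ᶜ A ⊆ reachSet G' (Z : Set V)ᶜ A := by
    refine reachSet_subset_of_closed (fun a ha => mem_reachSet_of_mem ha.1 ha.2) ?_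
    intro u hu v hv huv
    by_cases huv' : G'.Adj u v
    · exact mem_reachSet_of_adj hu huv' hv
    · rcases Sym2.eq_iff.mp (hG u v huv huv') with ⟨rfl, -⟩ | ⟨rfl, -⟩
      · exact (hdisj u hu (Set.mem_insert u S)).elim
      · exact (hy (hsub hu)).elim
  obtain ⟨b, hb, hbB⟩ := h Z hZ
  exact Set.disjoint_left.mp hS (hsub (hclosed hb)) hbB

/-- Linkages to `t` and from `t'` on the two sides of a separator are joined along trivial paths and
edges `t i`–`t' i`. -/
lemma IsLinkage.exists_glue {ι : Type*} [Finite ι] {Q R : ι → Set V} {t t' : ι → V}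
    (hQ : IsLinkage G' A (Set.range t) Q) (hR : IsLinkage G' B (Set.range t') R) (hG : G' ≤ G)
    (hs : reachSet G' (Set.range t)ᶜ A ⊆ s) (hU : reachSet G' (Set.range t')ᶜ B ⊆ U)
    (hsU : Disjoint s U) (ht : ∀ i, t i ∉ U) (ht' : ∀ i, t' i ∉ s)
    (hne : ∀ i j, i ≠ j → t i ≠ t' j) (hadj : ∀ i, t i = t' i ∨ G.Adj (t i) (t' i)) :
    ∃ P : ι → Set V, IsLinkage G A B P := by
  obtain ⟨Q, hQdisj, hQ⟩ := hQ.exists_trim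
  obtain ⟨R, hRdisj, hR⟩ := hR.exists_trim
  have hQR (i j) (hij : i ≠ j) : Disjoint (Q i) (R j) := by
    refine Disjoint.mono ((hQ i).2.trans (Set.insert_subset_insert hs))
      ((hR j).2.trans (Set.insert_subset_insert hU)) ?_
    simp only [Set.disjoint_insert_left, Set.disjoint_insert_right, Set.mem_insert_iff, not_or]
    exact ⟨⟨(hne i j hij).symm, ht' j⟩, ht i, hsU⟩
  refine ⟨fun i => Q i ∪ R i, fun i j hij => ?_, fun i => reachSet_inter_nonempty_symm ?_⟩
  · simp only [Function.onFun, Set.disjoint_union_left, Set.disjoint_union_right]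
    exact ⟨⟨hQdisj hij, (hQR j i hij.symm).symm⟩, hQR i j hij, hRdisj hij⟩
  · have hti : t i ∈ Q i ∪ R i := Or.inl (reachSet_subset (hQ i).1)
    have htB : t i ∈ reachSet G (Q i ∪ R i) B := by
      have ht'B := reachSet_mono hG (Set.subset_union_right (s := Q i)) (hR i).1
      rcases hadj i with h | h
      · rwa [h]
      · exact mem_reachSet_of_adj ht'B h.symm hti
    obtain ⟨a, ha, p, hp⟩ := (hQ i).1
    refine ⟨a, mem_reachSet_of_walk htB (p.reverse.mapLe hG) ?_, ha⟩
    simpa using fun w hw => Or.inl (hp w hw)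

/-- The inductive step of Menger's theorem: an edge `x y` whose deletion allows the separator `S`
is the middle of one of the paths. -/
lemma NoSmallSeparator.exists_isLinkage_of_deleteEdge {k : ℕ} {S : Finset V}
    (h : NoSmallSeparator G A B k) (hSk : S.card < k) (hG' : G' ≤ G) (hxy : G.Adj x y)
    (hG : ∀ u v, G.Adj u v → ¬G'.Adj u v → s(u, v) = s(x, y))
    (hS : Disjoint (reachSet G' (S : Set V)ᶜ A) (reachSet G' (S : Set V)ᶜ B))
    (hx : x ∈ reachSet G' (S : Set V)ᶜ A) (hy : y ∈ reachSet G' (S : Set V)ᶜ B)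
    (ih : ∀ A B : Set V, NoSmallSeparator G' A B k → ∃ Q : Fin k → Set V, IsLinkage G' A B Q) :
    ∃ Q : Fin k → Set V, IsLinkage G A B Q := by
  have hA : NoSmallSeparator G' A (insert x S) k :=
    h.insert_left hG (disjoint_reachSet_iff.mp hS) (Set.disjoint_right.mp hS hy)
  have hB : NoSmallSeparator G' B (insert y S) k :=
    h.symm.insert_left (fun u v huv huv' => (hG u v huv huv').trans Sym2.eq_swap)
      (disjoint_reachSet_iff.mp hS.symm) (Set.disjoint_left.mp hS hx)
  have hxS : x ∉ S := reachSet_subset hx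
  have hyS : y ∉ S := reachSet_subset hy
  have hcard : S.card + 1 = k := by
    by_contra hne
    obtain ⟨v, hv, hvS⟩ := hA (S.cons x hxS) (by rw [Finset.card_cons]; omega)
    exact reachSet_subset hv (by simpa using hvS)
  subst hcard
  obtain ⟨Q, hQ⟩ := ih A _ hA
  obtain ⟨R, hR⟩ := ih B _ hB
  let s : Fin S.card → V := fun i => S.equivFin.symm i
  have hs_mem (i) : s i ∈ S := (S.equivFin.symm i).2
  have hs_ne {i j} (hij : i ≠ j) : s i ≠ s j :=
    fun e => hij (S.equivFin.symm.injective (Subtype.ext e))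
  have hs_range (z : V) :
      Set.range (Fin.cons z s : Fin (S.card + 1) → V) = insert z (S : Set V) := by
    rw [Fin.range_cons]
    congr 1
    exact (S.equivFin.symm.surjective.range_comp _).trans Subtype.range_coe
  have hcompl (z : V) : (insert z (S : Set V))ᶜ ⊆ (S : Set V)ᶜ :=
    Set.compl_subset_compl.mpr (Set.subset_insert z S)
  rw [← hs_range] at hQ hR
  refine hQ.exists_glue hR hG' (reachSet_mono le_rfl ((hs_range x).symm ▸ hcompl x))
    (reachSet_mono le_rfl ((hs_range y).symm ▸ hcompl y)) hS
    (Fin.cases (Set.disjoint_left.mp hS hx) fun i hi => reachSet_subset hi (hs_mem i))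
    (Fin.cases (Set.disjoint_right.mp hS hy) fun i hi => reachSet_subset hi (hs_mem i))
    (Fin.cases (Fin.cases (absurd rfl) fun j _ e => ?_)
      fun i => Fin.cases (fun _ e => ?_) fun j hij => ?_)
    (Fin.cases (Or.inr hxy) fun i => Or.inl rfl)
  · exact hxS ((show x = s j from e) ▸ hs_mem j)
  · exact hyS ((show s i = y from e) ▸ hs_mem i)
  · exact hs_ne fun e => hij (congrArg _ e)

lemma NoSmallSeparator.exists_boundary_adj {k : ℕ} {S : Finset V}
    (h : NoSmallSeparator G A B k) (hSk : S.card < k)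
    (hS : Disjoint (reachSet G' (S : Set V)ᶜ A) B) :
    ∃ u ∈ reachSet G' (S : Set V)ᶜ A, ∃ v ∉ reachSet G' (S : Set V)ᶜ A,
      G.Adj u v ∧ ¬G'.Adj u v := by
  by_contra! hcon
  obtain ⟨b, hb, hbB⟩ := h S hSk
  refine Set.disjoint_left.mp hS (reachSet_subset_of_closed (fun a ha =>
    mem_reachSet_of_mem ha.1 ha.2) (fun u hu v hv huv => ?_) hb) hbB
  by_contra hvU
  exact hvU (mem_reachSet_of_adj hu (hcon u hu v hvU huv) hv)

/-- **Menger's theorem**, for sets of vertices. -/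
theorem NoSmallSeparator.exists_isLinkage [Finite V] {k : ℕ} (h : NoSmallSeparator G A B k) :
    ∃ Q : Fin k → Set V, IsLinkage G A B Q := by
  induction G using WellFoundedLT.induction generalizing A B with
  | _ G ih =>
  rcases eq_or_ne G ⊥ with rfl | hne
  · exact h.exists_isLinkage_of_bot
  obtain ⟨u, v, huv⟩ := ne_bot_iff_exists_adj.mp hne
  set G' := G.deleteEdges {s(u, v)}
  have hle : G' ≤ G := deleteEdges_le _
  have hlt : G' < G := lt_of_le_of_ne hle fun e => by
    have : G'.Adj u v := e ▸ huv
    simp [G'] at this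
  by_cases h' : NoSmallSeparator G' A B k
  · obtain ⟨Q, hQ⟩ := ih G' hlt h'
    exact ⟨Q, hQ.mono hle⟩
  simp only [NoSmallSeparator, not_forall, Set.not_nonempty_iff_eq_empty,
    ← Set.disjoint_iff_inter_eq_empty] at h'
  obtain ⟨S, hSk, hSA⟩ := h'
  have hAB := disjoint_reachSet_iff.mpr hSA
  have hSB := disjoint_reachSet_iff.mp hAB.symm
  have hG (a b) (hab : G.Adj a b) (hab' : ¬G'.Adj a b) : s(a, b) = s(u, v) := by
    by_contra hne
    exact hab' (deleteEdges_adj.mpr ⟨hab, hne⟩)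
  obtain ⟨x, hx, y, hyA, hxy, hxy'⟩ := h.exists_boundary_adj hSk hSA
  obtain ⟨y', hy', x', -, hyx, hyx'⟩ := h.symm.exists_boundary_adj hSk hSB
  have hxy_eq := hG x y hxy hxy'
  have hy : y ∈ reachSet G' (S : Set V)ᶜ B := by
    rcases Sym2.eq_iff.mp ((hG y' x' hyx hyx').trans hxy_eq.symm) with ⟨rfl, -⟩ | ⟨rfl, -⟩
    · exact (Set.disjoint_left.mp hAB hx hy').elim
    · exact hy'
  exact h.exists_isLinkage_of_deleteEdge hSk hle hxy
    (fun a b hab hab' => (hG a b hab hab').trans hxy_eq.symm) hAB hx hy fun A B => ih G' hlt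

end Menger

/-! ### Cycles in 3-connected graphs -/

section Cycles

variable {V : Type*} {G : SimpleGraph V} {s : Set V} {a b c d u v x y : V}

/-- Menger's theorem for two nonadjacent vertices: apply the version for sets to their
neighbourhoods. -/
theorem exists_isPath_of_forall_mem_reachSet [Finite V] {k : ℕ} (hne : x ≠ y) (hxy : ¬G.Adj x y)
    (h : ∀ X : Set V, X.ncard < k → x ∉ X → y ∉ X → y ∈ reachSet G Xᶜ {x}) :
    ∃ p : Fin k → G.Walk x y, (∀ i, (p i).IsPath) ∧ ∀ i j, i ≠ j →
      ∀ z ∈ (p i).support, z ∈ (p j).support → z = x ∨ z = y := by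
  classical
  have hsep : NoSmallSeparator G (G.neighborSet x) (G.neighborSet y) k := by
    intro X hX
    by_contra! hempty
    set R := reachSet G (X : Set V)ᶜ (G.neighborSet x)
    have hy : y ∈ reachSet G ((X : Set V) \ {x, y})ᶜ {x} :=
      h _ ((Set.ncard_le_ncard Set.sdiff_subset).trans_lt (by rwa [Set.ncard_coe_finset]))
        (by simp) (by simp)
    have hsub : reachSet G ((X : Set V) \ {x, y})ᶜ {x} ⊆ insert x (R \ {y}) := by
      refine reachSet_subset_of_closed (fun a ha => Or.inl ha.1) fun u hu v hv huv => ?_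
      have hvR (hvX : v ∉ X) (hxv : G.Adj x v) : v ∈ R := mem_reachSet_of_mem hxv hvX
      have huR (hvX : v ∉ X) (hu : u ∈ R) : v ∈ R := mem_reachSet_of_adj hu huv hvX
      have hempty : u ∈ R → ¬G.Adj u y := fun hu huy =>
        (Set.ext_iff.mp hempty u).mp ⟨hu, huy.symm⟩
      simp only [Set.mem_compl_iff, Set.mem_sdiff, Set.mem_insert_iff, Set.mem_singleton_iff,
        SetLike.mem_coe] at *
      grind
    rcases hsub hy with hyx | hyR
    · exact hne hyx.symm
    · exact hyR.2 rfl
  obtain ⟨Q, hQdisj, hQ⟩ := hsep.exists_isLinkage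
  have hpath (i) : ∃ p : G.Walk x y, p.IsPath ∧ ∀ z ∈ p.support, z = x ∨ z = y ∨ z ∈ Q i := by
    obtain ⟨b, ⟨a, (ha : G.Adj x a), p, hp⟩, (hb : G.Adj y b)⟩ := hQ i
    refine ⟨_, (Walk.cons ha (p.concat hb.symm)).bypass_isPath, fun z hz => ?_⟩
    have hz := Walk.support_bypass_subset_support _ hz
    rw [Walk.support_cons, Walk.support_concat] at hz
    grind
  choose p hp hpQ using hpath
  refine ⟨p, hp, fun i j hij z hzi hzj => ?_⟩
  have hzQ : z ∈ Q i → z ∉ Q j := fun h => Set.disjoint_left.mp (hQdisj hij) h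
  grind

lemma mem_reachSet_singleton_iff :
    v ∈ reachSet G s {u} ↔ ∃ (hu : u ∈ s) (hv : v ∈ s), (G.induce s).Reachable ⟨u, hu⟩ ⟨v, hv⟩ := by
  constructor
  · rintro ⟨_, rfl, p, hp⟩
    exact ⟨hp _ p.start_mem_support, hp _ p.end_mem_support, ⟨p.induce s hp⟩⟩
  · rintro ⟨hu, hv, ⟨p⟩⟩
    refine ⟨u, rfl, p.map (Embedding.induce s).toHom, fun w hw => ?_⟩
    obtain ⟨z, -, rfl⟩ := List.mem_map.mp (Walk.support_map _ p ▸ hw)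
    exact z.2

lemma reachSet_singleton_comm : v ∈ reachSet G s {u} ↔ u ∈ reachSet G s {v} := by
  simp only [mem_reachSet_singleton_iff]
  exact ⟨fun ⟨hu, hv, h⟩ => ⟨hv, hu, h.symm⟩, fun ⟨hv, hu, h⟩ => ⟨hu, hv, h.symm⟩⟩

namespace ThreeConnected

lemma mem_reachSet (h3 : ThreeConnected G) (hs : s.Finite) (hcard : s.ncard ≤ 2) (hu : u ∉ s)
    (hv : v ∉ s) : v ∈ reachSet G sᶜ {u} :=
  mem_reachSet_singleton_iff.mpr ⟨hu, hv, (h3.2 s hs hcard).preconnected _ _⟩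

lemma exists_notMem [Finite V] (h3 : ThreeConnected G) (hs : s.ncard ≤ 3) : ∃ v, v ∉ s := by
  have hcard : 3 < Nat.card V := h3.1.resolve_right (not_infinite_iff_finite.mpr inferInstance)
  rw [← Set.ncard_univ] at hcard
  obtain ⟨v, -, hv⟩ := Set.exists_mem_notMem_of_ncard_lt_ncard (hs.trans_lt hcard)
  exact ⟨v, hv⟩

lemma exists_adj [Finite V] (h3 : ThreeConnected G) : ∃ u v, G.Adj u v := by
  obtain ⟨u, -⟩ := h3.exists_notMem (s := ∅) (by simp)
  obtain ⟨w, hw⟩ := h3.exists_notMem (s := {u}) (by simp)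
  obtain ⟨_, rfl, p, -⟩ := h3.mem_reachSet (s := ∅) Set.finite_empty (by simp) (u := u) (v := w)
    (by simp) (by simp)
  cases p with
  | nil => exact absurd rfl hw
  | cons h _ => exact ⟨_, _, h⟩

lemma exists_isCycle [Finite V] (h3 : ThreeConnected G) : ∃ v, ∃ w : G.Walk v v, w.IsCycle := by
  classical
  obtain ⟨u, v, huv⟩ := h3.exists_adj
  obtain ⟨w, hw⟩ := h3.exists_notMem (s := {u, v}) (by
    have := Set.ncard_insert_le u {v}
    rw [Set.ncard_singleton] at this
    omega)
  simp only [Set.mem_insert_iff, Set.mem_singleton_iff, not_or] at hw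
  obtain ⟨a, ha, p, hp⟩ := h3.mem_reachSet (Set.finite_singleton v) (by simp) huv.ne hw.2
  obtain ⟨b, hb, q, hq⟩ := h3.mem_reachSet (Set.finite_singleton u) (by simp) huv.ne' hw.1
  obtain rfl : a = u := ha
  obtain rfl : b = v := hb
  refine ⟨_, .cons huv.symm (p.append q.reverse).bypass,
    (Walk.cons_isCycle_iff _ _).mpr ⟨Walk.bypass_isPath _, fun he => ?_⟩⟩
  have he := Walk.edges_bypass_subset_edges _ he
  rw [Walk.edges_append, Walk.edges_reverse, List.mem_append, List.mem_reverse] at he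
  rcases he with he | he
  · exact hp _ (p.fst_mem_support_of_mem_edges he) rfl
  · exact hq _ (q.snd_mem_support_of_mem_edges he) rfl

end ThreeConnected

/-- Two paths from `a` to `b` which together form a cycle. -/
structure IsCyclePair (p q : G.Walk a b) : Prop where
  ne : a ≠ b
  isPath_left : p.IsPath
  isPath_right : q.IsPath
  eq_or_eq : ∀ z ∈ p.support, z ∈ q.support → z = a ∨ z = b
  disjoint_edges : p.edges.Disjoint q.edges

lemma IsCyclePair.of_not_adj {p q : G.Walk a b} (hab : a ≠ b) (hadj : ¬G.Adj a b) (hp : p.IsPath)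
    (hq : q.IsPath) (h : ∀ z ∈ p.support, z ∈ q.support → z = a ∨ z = b) : IsCyclePair p q := by
  refine ⟨hab, hp, hq, h, fun e hep heq => ?_⟩
  induction e with
  | _ c d =>
    have hcd := p.adj_of_mem_edges hep
    have hc := h c (p.fst_mem_support_of_mem_edges hep) (q.fst_mem_support_of_mem_edges heq)
    have hd := h d (p.snd_mem_support_of_mem_edges hep) (q.snd_mem_support_of_mem_edges heq)
    grind [hcd.ne, hcd.symm]

lemma ThreeConnected.exists_pairwise_isCyclePair [Finite V] (h3 : ThreeConnected G) (hab : a ≠ b)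
    (hadj : ¬G.Adj a b) :
    ∃ p : Fin 3 → G.Walk a b, Pairwise fun i j => IsCyclePair (p i) (p j) := by
  obtain ⟨p, hp, hpp⟩ := exists_isPath_of_forall_mem_reachSet (k := 3) hab hadj fun X hX ha hb =>
    h3.mem_reachSet X.toFinite (by omega) ha hb
  exact ⟨p, fun i j hij => .of_not_adj hab hadj (hp i) (hp j) (hpp i j hij)⟩

lemma IsCyclePair.isCycle {p q : G.Walk a b} (h : IsCyclePair p q) :
    (p.append q.reverse).IsCycle := by
  have hne : p ≠ q := fun hpq => by
    obtain ⟨e, he, -⟩ := (Walk.mem_support_iff_exists_mem_edges_of_not_nil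
      (Walk.not_nil_of_ne h.ne)).mp p.start_mem_support
    exact h.disjoint_edges he (hpq ▸ he)
  refine h.isPath_left.isCycle_append h.isPath_right.reverse (fun z hzp hzq => ?_) ?_
  · have := h.eq_or_eq z
    grind [Walk.dropLast_support_concat, h.isPath_left.support_nodup,
      h.isPath_right.support_nodup, Walk.support_reverse, Walk.cons_tail_support]
  · grind [Walk.length_reverse, Walk.eq_of_length_le_one]

lemma exists_isCyclePair {w : G.Walk v v} (hw : w.IsCycle) (ha : a ∈ w.support)
    (hb : b ∈ w.support) (hab : a ≠ b) :
    ∃ p q : G.Walk a b, IsCyclePair p q ∧ w.edgeSet = p.edgeSet ∪ q.edgeSet := by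
  classical
  have hb' : b ∈ (w.rotate a ha).support := (Walk.mem_support_rotate_iff ..).mpr hb
  obtain ⟨p, q, hpq⟩ : ∃ (p : G.Walk a b) (q : G.Walk b a), p.append q = w.rotate a ha :=
    ⟨_, _, Walk.take_spec _ hb'⟩
  have hc : (p.append q).IsCycle := hpq ▸ (Walk.isCycle_rotate ha).mpr hw
  have hsupport := hc.support_nodup
  have hedges := hc.edges_nodup
  rw [Walk.tail_support_append, List.nodup_append'] at hsupport
  rw [Walk.edges_append, List.nodup_append'] at hedges
  refine ⟨p, q.reverse, ⟨hab, hc.isPath_of_append_left (Walk.not_nil_of_ne hab.symm),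
    (hc.isPath_of_append_right (Walk.not_nil_of_ne hab)).reverse, fun z hzp hzq => ?_, ?_⟩, ?_⟩
  · rw [Walk.support_reverse, List.mem_reverse, ← Walk.cons_tail_support, List.mem_cons] at hzq
    rw [← Walk.cons_tail_support, List.mem_cons] at hzp
    by_contra! hz
    exact hsupport.2.2 (hzp.resolve_left hz.1) (hzq.resolve_left hz.2)
  · simpa using hedges.2.2
  · rw [Walk.edgeSet_reverse, ← Walk.edgeSet_append, hpq]
    exact Set.ext fun e => (Walk.rotate_edges w a ha).mem_iff.symm

/-- A path which meets the closed walk `w` exactly in its two distinct ends and shares no edge with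
it. -/
structure IsEar (w : G.Walk v v) (P : G.Walk c d) : Prop where
  ne : c ≠ d
  isPath : P.IsPath
  start_mem : c ∈ w.support
  end_mem : d ∈ w.support
  eq_or_eq : ∀ z ∈ P.support, z ∈ w.support → z = c ∨ z = d
  disjoint_edges : P.edges.Disjoint w.edges

namespace IsEar

lemma of_adj {w : G.Walk v v} (ha : a ∈ w.support) (hb : b ∈ w.support) (hab : G.Adj a b)
    (he : s(a, b) ∉ w.edges) : IsEar w hab.toWalk :=
  ⟨hab.ne, hab.isPath_toWalk, ha, hb, by simp [Adj.toWalk], by simpa [Adj.toWalk] using he⟩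

lemma exists_isCyclePair {w : G.Walk v v} {P : G.Walk c d} (hP : IsEar w P) (hw : w.IsCycle) :
    ∃ p q : G.Walk c d, IsCyclePair p q ∧ IsCyclePair p P ∧ IsCyclePair q P ∧
      w.edgeSet = p.edgeSet ∪ q.edgeSet := by
  obtain ⟨p, q, hpq, hE⟩ := _root_.exists_isCyclePair hw hP.start_mem hP.end_mem hP.ne
  have hpair (r : G.Walk c d) (hr : r.IsPath) (hrE : r.edgeSet ⊆ w.edgeSet) : IsCyclePair r P := by
    refine ⟨hP.ne, hr, hP.isPath, fun z hzr hzP => hP.eq_or_eq z hzP ?_,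
      fun e her heP => hP.disjoint_edges heP (hrE her)⟩
    obtain ⟨e, he, hze⟩ := (Walk.mem_support_iff_exists_mem_edges_of_not_nil
      (Walk.not_nil_of_ne hP.ne)).mp hzr
    exact Walk.mem_support_of_mem_edges (hrE he) hze
  exact ⟨p, q, hpq, hpair p hpq.isPath_left (hE ▸ Set.subset_union_left),
    hpair q hpq.isPath_right (hE ▸ Set.subset_union_right), hE⟩

end IsEar

lemma ThreeConnected.exists_adj_mem_support (h3 : ThreeConnected G) {w : G.Walk v v}
    (hw : w.IsCycle) (ha : a ∉ w.support) (hc : c ∈ w.support) :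
    ∃ u ∈ reachSet G {z | z ∉ w.support} {a}, ∃ d ∈ w.support, d ≠ c ∧ G.Adj u d := by
  obtain ⟨y, hy, hyc⟩ : ∃ y ∈ w.support, y ≠ c := by
    by_cases hcv : c = v
    · exact ⟨w.snd, w.getVert_mem_support 1, hcv ▸ (w.adj_snd hw.not_nil).ne'⟩
    · exact ⟨v, w.start_mem_support, Ne.symm hcv⟩
  by_contra! hnone
  have hsub : reachSet G {c}ᶜ {a} ⊆ reachSet G {z | z ∉ w.support} {a} :=
    reachSet_subset_of_closed (fun z hz => mem_reachSet_of_mem hz.1 (by rwa [hz.1]))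
      fun u hu z hz huz => mem_reachSet_of_adj hu huz fun hzw => hnone u hu z hzw hz huz
  have hya : y ∈ reachSet G {c}ᶜ {a} :=
    h3.mem_reachSet (Set.finite_singleton c) (by simp) (by rintro rfl; exact ha hc) hyc
  exact reachSet_subset (hsub hya) hy

lemma ThreeConnected.exists_isEar_of_notMem (h3 : ThreeConnected G) {w : G.Walk v v}
    (hw : w.IsCycle) (ha : a ∉ w.support) :
    ∃ (c d : V) (P : G.Walk c d), IsEar w P ∧
      ∃ b ∈ P.support, b ∈ reachSet G {z | z ∉ w.support} {a} := by
  classical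
  obtain ⟨u, hu, c, hc, -, huc⟩ := h3.exists_adj_mem_support hw ha w.start_mem_support
  obtain ⟨u', hu', d, hd, hdc, hud⟩ := h3.exists_adj_mem_support hw ha hc
  obtain ⟨p, hp, hpw⟩ : ∃ p : G.Walk u u', p.IsPath ∧ ∀ z ∈ p.support, z ∉ w.support := by
    obtain ⟨_, rfl, p, hp⟩ := hu
    obtain ⟨_, rfl, q, hq⟩ := hu'
    refine ⟨_, (p.reverse.append q).bypass_isPath, fun z hz => ?_⟩
    have hz := Walk.support_bypass_subset_support _ hz
    rw [Walk.mem_support_append_iff, Walk.support_reverse, List.mem_reverse] at hz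
    exact hz.elim (hp z) (hq z)
  refine ⟨c, d, .cons huc.symm (p.concat hud), ⟨Ne.symm hdc, ?_, hc, hd, ?_, ?_⟩, u, by simp, hu⟩
  · rw [Walk.cons_isPath_iff, Walk.support_concat]
    refine ⟨hp.concat (fun h => hpw d h hd) hud, ?_⟩
    grind
  · simp only [Walk.support_cons, Walk.support_concat]
    grind
  · intro e he hew
    obtain ⟨z, hze, hz⟩ : ∃ z ∈ e, z ∈ p.support := by
      simp only [Walk.edges_cons, Walk.edges_concat, List.concat_eq_append, List.mem_cons,
        List.mem_append, List.not_mem_nil, or_false] at he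
      rcases he with rfl | he | rfl
      · exact ⟨u, by simp, p.start_mem_support⟩
      · exact ⟨_, e.out_fst_mem, p.mem_support_of_mem_edges he e.out_fst_mem⟩
      · exact ⟨u', by simp, p.end_mem_support⟩
    exact hpw z hz (w.mem_support_of_mem_edges hew hze)

lemma exists_mem_support_ne_ne {p : G.Walk a b} (hab : a ≠ b)
    (he : s(a, b) ∉ p.edges) : ∃ z ∈ p.support, z ≠ a ∧ z ≠ b := by
  cases p with
  | nil => exact absurd rfl hab
  | cons h q => exact ⟨_, by simp, h.ne', by rintro rfl; simp at he⟩

lemma ThreeConnected.exists_adj_of_isCyclePair (h3 : ThreeConnected G) {p q : G.Walk a b}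
    (hpq : IsCyclePair p q) (hp : s(a, b) ∉ p.edges) (hq : s(a, b) ∉ q.edges) :
    ∃ u v, G.Adj u v ∧ v ∈ q.support ∧ v ∉ p.support ∧
      ∃ t ∈ p.support, t ∈ reachSet G {c | c ∉ q.support} {u} := by
  obtain ⟨t, ht, hta, htb⟩ := exists_mem_support_ne_ne hpq.ne hp
  obtain ⟨y, hy, hya, hyb⟩ := exists_mem_support_ne_ne hpq.ne hq
  by_contra! hnone
  have hsub : reachSet G {a, b}ᶜ {t} ⊆ reachSet G {c | c ∉ q.support} {t} := by
    refine reachSet_subset_of_closed (fun c hc => mem_reachSet_of_mem hc.1 ?_)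
      fun u hu v hv huv => mem_reachSet_of_adj hu huv fun hvq => ?_
    · obtain rfl : c = t := hc.1
      exact fun hcq => (hpq.eq_or_eq c ht hcq).elim hta htb
    · exact hnone u v huv hvq (fun hvp => hv (hpq.eq_or_eq v hvp hvq)) t ht
        (reachSet_singleton_comm.mp hu)
  have hyt : y ∈ reachSet G {a, b}ᶜ {t} :=
    h3.mem_reachSet (Set.toFinite _) (Set.ncard_pair hpq.ne).le (by simp [hta, htb])
      (by simp [hya, hyb])
  exact reachSet_subset (hsub hyt) hy

end Cycles

/-! ### Plane embeddings -/

namespace PlanarEmbedding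

variable {V : Type*} {G : SimpleGraph V} (emb : PlanarEmbedding G)
  {E E' : Set (Sym2 V)} {a b c u v : V} {x y z : ℝ × ℝ}

/-- The point set covered by the arcs of the edges in `E`. -/
def trace (E : Set (Sym2 V)) : Set (ℝ × ℝ) :=
  ⋃ (u : V) (v : V) (h : G.Adj u v) (_ : s(u, v) ∈ E), emb.arc h

/-- The component of `x` in the complement of the edges in `E`, a face of the subgraph spanned by
these edges. -/
def region (E : Set (Sym2 V)) (x : ℝ × ℝ) : Set (ℝ × ℝ) :=
  connectedComponentIn (emb.trace E)ᶜ x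

variable {emb}

lemma mem_trace : z ∈ emb.trace E ↔ ∃ u v, ∃ h : G.Adj u v, s(u, v) ∈ E ∧ z ∈ emb.arc h := by
  simp only [trace, Set.mem_iUnion, exists_prop]

lemma isArc_arc (h : G.Adj u v) : IsArc (emb.arc h) (emb.vpos u) (emb.vpos v) := emb.arc_isArc h

lemma arc_subset_trace (h : G.Adj u v) (he : s(u, v) ∈ E) : emb.arc h ⊆ emb.trace E :=
  fun _ hz => mem_trace.mpr ⟨u, v, h, he, hz⟩

lemma trace_mono (hE : E ⊆ E') : emb.trace E ⊆ emb.trace E' := fun _ hz =>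
  let ⟨u, v, h, he, hz⟩ := mem_trace.mp hz
  mem_trace.mpr ⟨u, v, h, hE he, hz⟩

lemma trace_union : emb.trace (E ∪ E') = emb.trace E ∪ emb.trace E' := by
  ext z
  simp only [mem_trace, Set.mem_union, or_and_right, exists_or]

lemma arc_subset_image (h : G.Adj u v) : emb.arc h ⊆ emb.image := fun _ hz =>
  Or.inr (Set.mem_iUnion₂.mpr ⟨u, v, Set.mem_iUnion.mpr ⟨h, hz⟩⟩)

lemma trace_subset_image : emb.trace E ⊆ emb.image := fun _ hz =>
  let ⟨_, _, h, _, hz⟩ := mem_trace.mp hz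
  arc_subset_image h hz

lemma isCompact_trace [Finite V] : IsCompact (emb.trace E) :=
  isCompact_iUnion fun _ => isCompact_iUnion fun _ => isCompact_iUnion fun h =>
    isCompact_iUnion fun _ => (isArc_arc h).isCompact

lemma trace_singleton (h : G.Adj u v) : emb.trace {s(u, v)} = emb.arc h := by
  refine Set.Subset.antisymm (fun z hz => ?_) (arc_subset_trace h rfl)
  obtain ⟨u', v', h', he, hz'⟩ := mem_trace.mp hz
  rcases Sym2.eq_iff.mp he with ⟨rfl, rfl⟩ | ⟨rfl, rfl⟩
  · exact hz'
  · rwa [emb.arc_symm] at hz'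

lemma arc_inter_trace_subset (h : G.Adj u v) (he : s(u, v) ∉ E) :
    emb.arc h ∩ emb.trace E ⊆ {emb.vpos u, emb.vpos v} := by
  rintro z ⟨hz, hzE⟩
  obtain ⟨u', v', h', he', hz'⟩ := mem_trace.mp hzE
  obtain ⟨w, ⟨rfl | rfl, -⟩, rfl⟩ := emb.arc_inter h h' (fun h => he (h ▸ he')) ⟨hz, hz'⟩
  · exact Or.inl rfl
  · exact Or.inr rfl

lemma trace_inter_trace_subset (hE : Disjoint E E') :
    emb.trace E ∩ emb.trace E' ⊆ Set.range emb.vpos := by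
  rintro z ⟨hz, hz'⟩
  obtain ⟨u, v, h, he, hz⟩ := mem_trace.mp hz
  rcases arc_inter_trace_subset h (Set.disjoint_left.mp hE he) ⟨hz, hz'⟩ with rfl | rfl <;> simp

lemma vpos_mem_trace_edgeSet {p : G.Walk a b} (hp : ¬p.Nil) :
    emb.vpos c ∈ emb.trace p.edgeSet ↔ c ∈ p.support := by
  rw [Walk.mem_support_iff_exists_mem_edges_of_not_nil hp, mem_trace]
  constructor
  · rintro ⟨u, v, h, he, hc⟩
    exact ⟨_, he, Sym2.mem_iff.mpr (emb.arc_vertex h c hc)⟩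
  · rintro ⟨e, he, hc⟩
    obtain ⟨d, rfl⟩ := Sym2.mem_iff_exists.mp hc
    have h := p.adj_of_mem_edges he
    exact ⟨c, d, h, he, (isArc_arc h).left_mem⟩

lemma isArc_trace {p : G.Walk a b} (hp : p.IsPath) (hab : a ≠ b) :
    IsArc (emb.trace p.edgeSet) (emb.vpos a) (emb.vpos b) := by
  induction p with
  | nil => exact absurd rfl hab
  | @cons u v w h q ih =>
    obtain ⟨hq, hu⟩ := (Walk.cons_isPath_iff h q).mp hp
    rw [Walk.edgeSet_cons, Set.insert_eq, trace_union, trace_singleton h]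
    rcases eq_or_ne v w with rfl | hvw
    · rw [Walk.eq_nil_iff_nil.mpr (Walk.isPath_iff_nil.mp hq), Walk.edgeSet_nil]
      simpa [trace] using isArc_arc h
    · refine (isArc_arc h).trans (ih hq hvw) fun z hz => ?_
      have he : s(u, v) ∉ q.edgeSet := fun he => hu (q.fst_mem_support_of_mem_edges he)
      refine (arc_inter_trace_subset h he hz).resolve_left ?_
      rintro rfl
      exact hu ((vpos_mem_trace_edgeSet (Walk.not_nil_of_ne hvw)).mp hz.2)

lemma trace_inter_trace_of_isCyclePair {p q : G.Walk a b} (h : IsCyclePair p q) :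
    emb.trace p.edgeSet ∩ emb.trace q.edgeSet ⊆ {emb.vpos a, emb.vpos b} := by
  intro z hz
  obtain ⟨c, rfl⟩ := trace_inter_trace_subset (Set.disjoint_left.mpr h.disjoint_edges) hz
  have hnil (r : G.Walk a b) := r.not_nil_of_ne h.ne
  rw [Set.mem_inter_iff, vpos_mem_trace_edgeSet (hnil p), vpos_mem_trace_edgeSet (hnil q)] at hz
  rcases h.eq_or_eq c hz.1 hz.2 with rfl | rfl <;> simp

lemma isJordanCurve_trace {w : G.Walk v v} (hw : w.IsCycle) :
    IsJordanCurve (emb.trace w.edgeSet) := by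
  obtain ⟨p, q, hpq, hE⟩ := exists_isCyclePair hw w.start_mem_support (w.getVert_mem_support 1)
    (w.adj_snd hw.not_nil).ne
  exact ⟨_, _, _, _, isArc_trace hpq.isPath_left hpq.ne, isArc_trace hpq.isPath_right hpq.ne,
    trace_inter_trace_of_isCyclePair hpq, by rw [hE, trace_union]⟩

lemma disjoint_region_of_isCyclePair {p q r : G.Walk a b} (hpq : IsCyclePair p q)
    (hpr : IsCyclePair p r) (hqr : IsCyclePair q r)
    (hx : x ∉ emb.trace (p.edgeSet ∪ q.edgeSet ∪ r.edgeSet)) :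
    Disjoint (emb.trace r.edgeSet) (emb.region (p.edgeSet ∪ q.edgeSet) x) ∨
      Disjoint (emb.trace q.edgeSet) (emb.region (p.edgeSet ∪ r.edgeSet) x) ∨
        Disjoint (emb.trace p.edgeSet) (emb.region (q.edgeSet ∪ r.edgeSet) x) := by
  simp only [region, trace_union] at hx ⊢
  exact disjoint_connectedComponentIn_of_theta_prod (isArc_trace hpq.isPath_left hpq.ne)
    (isArc_trace hpq.isPath_right hpq.ne) (isArc_trace hqr.isPath_right hqr.ne)
    (trace_inter_trace_of_isCyclePair hpq) (trace_inter_trace_of_isCyclePair hpr)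
    (trace_inter_trace_of_isCyclePair hqr) hx

lemma isPreconnected_arc_diff_trace (h : G.Adj u v) (he : s(u, v) ∉ E) :
    IsPreconnected (emb.arc h \ emb.trace E) := by
  exact (isArc_arc h).isPreconnected_diff.subset_closure
    (fun z hz => ⟨hz.1, fun hzE => hz.2 (arc_inter_trace_subset h he ⟨hz.1, hzE⟩)⟩)
    (Set.sdiff_subset.trans (isArc_arc h).subset_closure_diff)

lemma mem_region_of_mem_arc (h : G.Adj u v) (he : s(u, v) ∉ E) (hy : y ∈ emb.arc h)
    (hyE : y ∉ emb.trace E) (hz : z ∈ emb.arc h) (hzE : z ∉ emb.trace E) : z ∈ emb.region E y :=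
  (isPreconnected_arc_diff_trace h he).subset_connectedComponentIn ⟨hy, hyE⟩
    (fun _ hz => hz.2) ⟨hz, hzE⟩

lemma region_eq (hz : z ∈ emb.region E x) : emb.region E x = emb.region E z :=
  connectedComponentIn_eq hz

lemma notMem_trace_of_mem_region (hz : z ∈ emb.region E x) : z ∉ emb.trace E :=
  connectedComponentIn_subset _ _ hz

lemma mem_region_self (hx : x ∉ emb.trace E) : x ∈ emb.region E x := mem_connectedComponentIn hx

lemma region_subset_region (h : Disjoint (emb.trace E) (emb.region E' x)) :
    emb.region E' x ⊆ emb.region E x := by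
  intro z hz
  have hx : x ∈ (emb.trace E')ᶜ := connectedComponentIn_nonempty_iff.mp ⟨z, hz⟩
  exact isPreconnected_connectedComponentIn.subset_connectedComponentIn (mem_region_self hx)
    (fun y hy hyE => Set.disjoint_left.mp h hyE hy) hz

lemma vpos_mem_region_of_adj (h : G.Adj u v) (hu : emb.vpos u ∈ emb.region E x)
    (hv : emb.vpos v ∉ emb.trace E) : emb.vpos v ∈ emb.region E x := by
  have huE := notMem_trace_of_mem_region hu
  have he : s(u, v) ∉ E := fun he => huE (arc_subset_trace h he (isArc_arc h).left_mem)
  rw [region_eq hu]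
  exact mem_region_of_mem_arc h he (isArc_arc h).left_mem huE (isArc_arc h).right_mem hv

lemma vpos_mem_region_of_mem_reachSet {S : Set V} (hS : ∀ c ∈ S, emb.vpos c ∉ emb.trace E)
    (ha : emb.vpos a ∈ emb.region E x) (hb : b ∈ reachSet G S {a}) :
    emb.vpos b ∈ emb.region E x := by
  have hsub : reachSet G S {a} ⊆ {c | emb.vpos c ∈ emb.region E x} :=
    reachSet_subset_of_closed (fun c hc => by rwa [hc.1])
      fun c hc d hd hcd => vpos_mem_region_of_adj hcd hc (hS d hd)
  exact hsub hb

lemma exists_vpos_mem_or_exists_arc (hz : z ∈ emb.region E x) (hzi : z ∈ emb.image) :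
    (∃ a, emb.vpos a ∈ emb.region E x) ∨ ∃ u v, ∃ h : G.Adj u v, s(u, v) ∉ E ∧
      emb.vpos u ∈ emb.trace E ∧ emb.vpos v ∈ emb.trace E ∧ z ∈ emb.arc h := by
  have hzE := notMem_trace_of_mem_region hz
  rcases hzi with ⟨a, rfl⟩ | hz'
  · exact Or.inl ⟨a, hz⟩
  simp only [Set.mem_iUnion] at hz'
  obtain ⟨u, v, h, hzuv⟩ := hz'
  have he : s(u, v) ∉ E := fun he => hzE (arc_subset_trace h he hzuv)
  have hend (c : V) (hc : emb.vpos c ∈ emb.arc h) (hcE : emb.vpos c ∉ emb.trace E) :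
      emb.vpos c ∈ emb.region E x :=
    region_eq hz ▸ mem_region_of_mem_arc h he hzuv hzE hc hcE
  by_contra! hcon
  refine hcon.2 u v h he ?_ ?_ hzuv <;> by_contra hE
  · exact hcon.1 u (hend u (isArc_arc h).left_mem hE)
  · exact hcon.1 v (hend v (isArc_arc h).right_mem hE)

lemma exists_isEar_of_mem_region (h3 : ThreeConnected G) {w : G.Walk v v} (hw : w.IsCycle)
    (hz : z ∈ emb.region w.edgeSet x) (hzi : z ∈ emb.image) :
    ∃ (c d : V) (P : G.Walk c d), IsEar w P ∧
      (emb.trace P.edgeSet ∩ emb.region w.edgeSet x).Nonempty := by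
  have hsupport (c : V) : emb.vpos c ∈ emb.trace w.edgeSet ↔ c ∈ w.support :=
    vpos_mem_trace_edgeSet hw.not_nil
  rcases exists_vpos_mem_or_exists_arc hz hzi with ⟨a, ha⟩ | ⟨c, d, h, he, hc, hd, hzcd⟩
  · obtain ⟨c, d, P, hP, b, hbP, hb⟩ :=
      h3.exists_isEar_of_notMem hw (mt (hsupport a).mpr (notMem_trace_of_mem_region ha))
    exact ⟨c, d, P, hP, emb.vpos b, (vpos_mem_trace_edgeSet (Walk.not_nil_of_ne hP.ne)).mpr hbP,
      vpos_mem_region_of_mem_reachSet (fun c => mt (hsupport c).mp) ha hb⟩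
  · exact ⟨c, d, h.toWalk, .of_adj ((hsupport c).mp hc) ((hsupport d).mp hd) h he, z,
      arc_subset_trace h (by simp [Adj.toWalk]) hzcd, hz⟩

variable (emb) in
/-- A cycle which is the boundary of the face containing `x`: the side of the cycle on which `x`
lies contains no point of the embedded graph. -/
structure IsFacialCycle (w : G.Walk v v) (x : ℝ × ℝ) : Prop where
  isCycle : w.IsCycle
  notMem : x ∉ emb.trace w.edgeSet
  disjoint : Disjoint (emb.region w.edgeSet x) emb.image

/-- Among all cycles, one whose region around `x` is minimal is facial: otherwise an ear inside the
region splits it into two smaller ones. -/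
theorem exists_isFacialCycle [Finite V] (h3 : ThreeConnected G) (hx : x ∉ emb.image) :
    ∃ (v : V) (w : G.Walk v v), emb.IsFacialCycle w x := by
  obtain ⟨v₀, w₀, hw₀⟩ := h3.exists_isCycle
  obtain ⟨_, ⟨v, w, hw, rfl⟩, hmin⟩ := (Set.toFinite
    {E : Set (Sym2 V) | ∃ v, ∃ w : G.Walk v v, w.IsCycle ∧ w.edgeSet = E}).exists_minimalFor
      (emb.region · x) _ ⟨_, v₀, w₀, hw₀, rfl⟩
  refine ⟨v, w, hw, fun h => hx (trace_subset_image h), Set.disjoint_left.mpr fun z hz hzi => ?_⟩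
  obtain ⟨c, d, P, hP, y, hyP, hy⟩ := exists_isEar_of_mem_region h3 hw hz hzi
  obtain ⟨p, q, hpq, hpP, hqP, hE⟩ := hP.exists_isCyclePair hw
  have hsmaller (r r' : G.Walk c d) (hr : IsCyclePair r P)
      (hE : w.edgeSet = r.edgeSet ∪ r'.edgeSet) :
      ¬Disjoint (emb.trace r'.edgeSet) (emb.region (r.edgeSet ∪ P.edgeSet) x) := fun hdisj => by
    have hsub : emb.region (r.edgeSet ∪ P.edgeSet) x ⊆ emb.region w.edgeSet x := by
      refine region_subset_region ?_
      rw [hE, trace_union, Set.disjoint_union_left]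
      refine ⟨Set.disjoint_right.mpr fun z hz hzr => notMem_trace_of_mem_region hz ?_, hdisj⟩
      exact trace_mono Set.subset_union_left hzr
    have hyr := hmin ⟨c, _, hr.isCycle, by rw [Walk.edgeSet_append, Walk.edgeSet_reverse]⟩ hsub hy
    exact notMem_trace_of_mem_region hyr (trace_mono Set.subset_union_right hyP)
  rcases disjoint_region_of_isCyclePair (x := x) hpq hpP hqP (fun h => hx (trace_subset_image h))
    with h | h | h
  · exact Set.disjoint_left.mp h hyP (hE ▸ hy)
  · exact hsmaller p q hpP hE h
  · exact hsmaller q p hqP (hE.trans (Set.union_comm _ _)) h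

namespace IsFacialCycle

variable {w : G.Walk v v}

lemma notMem_image (hw : emb.IsFacialCycle w x) : x ∉ emb.image :=
  Set.disjoint_left.mp hw.disjoint (mem_region_self hw.notMem)

lemma region_eq_connectedComponentIn (hw : emb.IsFacialCycle w x) :
    emb.region w.edgeSet x = connectedComponentIn emb.imageᶜ x :=
  (isPreconnected_connectedComponentIn.subset_connectedComponentIn (mem_region_self hw.notMem)
    (Set.disjoint_left.mp hw.disjoint)).antisymm
    (connectedComponentIn_mono _ (Set.compl_subset_compl.mpr trace_subset_image))

lemma trace_subset_closure (hw : emb.IsFacialCycle w x) :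
    emb.trace w.edgeSet ⊆ closure (emb.region w.edgeSet x) :=
  (isJordanCurve_trace hw.isCycle).subset_closure_connectedComponentIn_prod hw.notMem

lemma boundaryEdges_eq [Finite V] (hw : emb.IsFacialCycle w x) :
    emb.boundaryEdges (connectedComponentIn emb.imageᶜ x) = w.edgeSet := by
  rw [← hw.region_eq_connectedComponentIn]
  refine Set.Subset.antisymm ?_ fun e he => ?_
  · rintro _ ⟨u, v, h, rfl, hclosure⟩
    by_contra he
    obtain ⟨z, hz, hzends⟩ := (isArc_arc (emb := emb) h).nonempty_diff
    have hzE : z ∉ emb.trace w.edgeSet := fun hzE =>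
      hzends (arc_inter_trace_subset h he ⟨hz, hzE⟩)
    exact Set.disjoint_left.mp hw.disjoint (mem_connectedComponentIn_of_mem_closure
      isCompact_trace.isClosed.isOpen_compl (hclosure hz) hzE) (arc_subset_image h hz)
  · induction e with
    | _ a b => exact ⟨a, b, w.adj_of_mem_edges he, rfl,
        (arc_subset_trace _ he).trans hw.trace_subset_closure⟩

lemma vpos_mem_region [Finite V] (hw : emb.IsFacialCycle w x) (hc : c ∈ w.support)
    (hcE : emb.vpos c ∉ emb.trace E) : emb.vpos c ∈ emb.region E x := by
  have hsub : emb.region w.edgeSet x ⊆ emb.region E x :=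
    region_subset_region (hw.disjoint.symm.mono_left trace_subset_image)
  refine mem_connectedComponentIn_of_mem_closure isCompact_trace.isClosed.isOpen_compl
    (closure_mono hsub (hw.trace_subset_closure ?_)) hcE
  exact (vpos_mem_trace_edgeSet hw.isCycle.not_nil).mpr hc

end IsFacialCycle

lemma vpos_mem_trace_union_singleton (hab : G.Adj a b) {p : G.Walk a b} :
    emb.vpos c ∈ emb.trace (p.edgeSet ∪ {s(a, b)}) ↔ c ∈ p.support := by
  rw [trace_union, trace_singleton hab, Set.mem_union,
    vpos_mem_trace_edgeSet (Walk.not_nil_of_ne hab.ne), or_iff_left_of_imp]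
  intro hc
  rcases emb.arc_vertex hab c hc with rfl | rfl <;> simp

/-- Any point inside an edge that crosses over from `p` to `q` will do. -/
lemma exists_not_disjoint_region (h3 : ThreeConnected G) {p q : G.Walk a b}
    (hpq : IsCyclePair p q) (hab : G.Adj a b) (hp : s(a, b) ∉ p.edges) (hq : s(a, b) ∉ q.edges) :
    ∃ z ∈ emb.image, z ∉ emb.trace (p.edgeSet ∪ q.edgeSet ∪ {s(a, b)}) ∧
      ¬Disjoint (emb.trace p.edgeSet) (emb.region (q.edgeSet ∪ {s(a, b)}) z) ∧
        ¬Disjoint (emb.trace q.edgeSet) (emb.region (p.edgeSet ∪ {s(a, b)}) z) := by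
  have hnil (r : G.Walk a b) : ¬r.Nil := r.not_nil_of_ne hpq.ne
  obtain ⟨u, v, huv, hv, hvp, t, ht, hut⟩ := h3.exists_adj_of_isCyclePair hpq hp hq
  have huq : u ∉ q.support := reachSet_subset (reachSet_singleton_comm.mp hut)
  obtain ⟨z, hz, hzends⟩ := (isArc_arc (emb := emb) huv).nonempty_diff
  have hnotMem {E : Set (Sym2 V)} (he : s(u, v) ∉ E) : z ∉ emb.trace E := fun hzE =>
    hzends (arc_inter_trace_subset huv he ⟨hz, hzE⟩)
  have hep : s(u, v) ∉ p.edgeSet := fun he => hvp (p.snd_mem_support_of_mem_edges he)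
  have heq : s(u, v) ∉ q.edgeSet := fun he => huq (q.fst_mem_support_of_mem_edges he)
  have heab : s(u, v) ≠ s(a, b) := fun he => by
    rcases Sym2.eq_iff.mp he with ⟨rfl, -⟩ | ⟨rfl, -⟩ <;> simp at huq
  refine ⟨z, arc_subset_image huv hz, hnotMem (not_or.mpr ⟨not_or.mpr ⟨hep, heq⟩, heab⟩), ?_, ?_⟩
  · have hu : emb.vpos u ∈ emb.region (q.edgeSet ∪ {s(a, b)}) z :=
      mem_region_of_mem_arc huv (not_or.mpr ⟨heq, heab⟩) hz (hnotMem (not_or.mpr ⟨heq, heab⟩))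
        (isArc_arc huv).left_mem (mt (vpos_mem_trace_union_singleton hab).mp huq)
    exact Set.not_disjoint_iff.mpr ⟨_, (vpos_mem_trace_edgeSet (hnil p)).mpr ht,
      vpos_mem_region_of_mem_reachSet
        (fun c hc => mt (vpos_mem_trace_union_singleton hab).mp hc) hu hut⟩
  · exact Set.not_disjoint_iff.mpr ⟨_, (vpos_mem_trace_edgeSet (hnil q)).mpr hv,
      mem_region_of_mem_arc huv (not_or.mpr ⟨hep, heab⟩) hz (hnotMem (not_or.mpr ⟨hep, heab⟩))
        (isArc_arc huv).right_mem (mt (vpos_mem_trace_union_singleton hab).mp hvp)⟩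

lemma IsFacialCycle.mem_edges_of_adj (h3 : ThreeConnected G) {w : G.Walk v v}
    (hw : emb.IsFacialCycle w x) (ha : a ∈ w.support) (hb : b ∈ w.support) (hab : G.Adj a b) :
    s(a, b) ∈ w.edges := by
  by_contra he
  have hP : IsEar w hab.toWalk := .of_adj ha hb hab he
  obtain ⟨p, q, hpq, hpP, hqP, hE⟩ := hP.exists_isCyclePair hw.isCycle
  have hPE : hab.toWalk.edgeSet = {s(a, b)} := by simp [Adj.toWalk, Walk.edgeSet_cons]
  have hE' : s(a, b) ∉ p.edgeSet ∪ q.edgeSet := hE ▸ he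
  obtain ⟨z, hzi, hz, hzp, hzq⟩ := exists_not_disjoint_region (emb := emb) h3 hpq hab
    (fun h => hE' (Or.inl h)) (fun h => hE' (Or.inr h))
  have htheta := disjoint_region_of_isCyclePair (emb := emb) (x := z) hpq hpP hqP
    (by rwa [hPE])
  rw [hPE, ← hE, trace_singleton hab] at htheta
  have hchord := htheta.resolve_right (not_or.mpr ⟨hzq, hzp⟩)
  obtain ⟨y, hy, hyends⟩ := (isArc_arc (emb := emb) hab).nonempty_diff
  have hyE : y ∉ emb.trace w.edgeSet := fun h => hyends (arc_inter_trace_subset hab he ⟨hy, h⟩)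
  have hzE : z ∉ emb.trace w.edgeSet := fun h => hz (hE ▸ trace_mono Set.subset_union_left h)
  have hxy : emb.region w.edgeSet x ≠ emb.region w.edgeSet y := fun h =>
    Set.disjoint_left.mp hw.disjoint (h ▸ mem_region_self hyE) (arc_subset_image hab hy)
  have hxz : emb.region w.edgeSet x ≠ emb.region w.edgeSet z := fun h =>
    Set.disjoint_left.mp hw.disjoint (h ▸ mem_region_self hzE) hzi
  have hyz : emb.region w.edgeSet y ≠ emb.region w.edgeSet z := fun h =>
    Set.disjoint_left.mp hchord hy (h ▸ mem_region_self hyE)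
  rcases (isJordanCurve_trace hw.isCycle).connectedComponentIn_eq_or_eq_or_eq_prod hw.notMem hyE hzE
    with h | h | h
  exacts [hxy h, hxz h, hyz h]

lemma IsFacialCycle.mem_reachSet [Finite V] (h3 : ThreeConnected G) {w : G.Walk v v}
    (hw : emb.IsFacialCycle w x) (ha : a ∉ w.support) (hb : b ∉ w.support) :
    b ∈ reachSet G {c | c ∉ w.support} {a} := by
  by_contra hab
  have hne : a ≠ b := by
    rintro rfl
    exact hab (mem_reachSet_of_mem rfl ha)
  have hadj : ¬G.Adj a b := fun h => hab (mem_reachSet_of_adj (mem_reachSet_of_mem rfl ha) h hb)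
  obtain ⟨p, hp⟩ := h3.exists_pairwise_isCyclePair hne hadj
  have hmeet (i) : ∃ c ∈ (p i).support, c ∈ w.support := by
    by_contra! hoff
    exact hab ⟨a, rfl, p i, hoff⟩
  have hcontra (i j k) (hij : i ≠ j) (hik : i ≠ k) :
      ¬Disjoint (emb.trace (p i).edgeSet) (emb.region ((p j).edgeSet ∪ (p k).edgeSet) x) := by
    obtain ⟨c, hci, hcw⟩ := hmeet i
    have hnil (l) : ¬(p l).Nil := (p l).not_nil_of_ne hne
    have hc (l) (hil : i ≠ l) : emb.vpos c ∉ emb.trace (p l).edgeSet := fun hcl => by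
      rcases (hp hil).eq_or_eq c hci ((vpos_mem_trace_edgeSet (hnil l)).mp hcl) with rfl | rfl
      exacts [ha hcw, hb hcw]
    refine Set.not_disjoint_iff.mpr ⟨emb.vpos c, (vpos_mem_trace_edgeSet (hnil i)).mpr hci,
      hw.vpos_mem_region hcw ?_⟩
    rw [trace_union]
    exact not_or.mpr ⟨hc j hij, hc k hik⟩
  rcases disjoint_region_of_isCyclePair (x := x) (hp (by decide : (0 : Fin 3) ≠ 1))
    (hp (by decide : (0 : Fin 3) ≠ 2)) (hp (by decide : (1 : Fin 3) ≠ 2))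
    (fun h => hw.notMem_image (trace_subset_image h)) with h | h | h
  · exact hcontra 2 0 1 (by decide) (by decide) h
  · exact hcontra 1 0 2 (by decide) (by decide) h
  · exact hcontra 0 1 2 (by decide) (by decide) h

lemma IsFacialCycle.isPeripheral [Finite V] (h3 : ThreeConnected G) {w : G.Walk v v}
    (hw : emb.IsFacialCycle w x) : IsPeripheral G w := by
  refine ⟨hw.isCycle, fun a ha b hb => hw.mem_edges_of_adj h3 ha hb, ?_⟩
  rcases Set.eq_empty_or_nonempty {c | c ∉ w.support} with h | ⟨a, ha⟩
  · exact Or.inl h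
  refine Or.inr ((connected_iff_exists_forall_reachable _).mpr ⟨⟨a, ha⟩, fun ⟨b, hb⟩ => ?_⟩)
  obtain ⟨_, _, hreach⟩ := mem_reachSet_singleton_iff.mp (hw.mem_reachSet h3 ha hb)
  exact hreach

theorem IsFace.exists_isPeripheral [Finite V] (h3 : ThreeConnected G) {F : Set (ℝ × ℝ)}
    (hF : emb.IsFace F) :
    ∃ (v : V) (w : G.Walk v v), IsPeripheral G w ∧ emb.boundaryEdges F = w.edgeSet := by
  obtain ⟨x, hx, rfl⟩ := hF
  obtain ⟨v, w, hw⟩ := exists_isFacialCycle h3 hx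
  exact ⟨v, w, hw.isPeripheral h3, hw.boundaryEdges_eq⟩

variable (emb) in
/-- The vertices off the cycle all lie on one side of it, so take a point on the other side. -/
lemma exists_forall_vpos_notMem_region {w : G.Walk v v} (hw : IsPeripheral G w) :
    ∃ x ∉ emb.trace w.edgeSet, ∀ a, emb.vpos a ∉ emb.region w.edgeSet x := by
  have hJ := isJordanCurve_trace (emb := emb) hw.1
  have hsupport (c : V) : emb.vpos c ∈ emb.trace w.edgeSet ↔ c ∈ w.support :=
    vpos_mem_trace_edgeSet hw.1.not_nil
  by_cases hall : ∀ a, a ∈ w.support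
  · obtain ⟨x, hx, -⟩ := hJ.exists_notMem_connectedComponentIn_prod 0
    exact ⟨x, hx, fun a ha => notMem_trace_of_mem_region ha ((hsupport a).mpr (hall a))⟩
  push Not at hall
  obtain ⟨a, ha⟩ := hall
  obtain ⟨x, hx, hax⟩ := hJ.exists_notMem_connectedComponentIn_prod (emb.vpos a)
  have haa : emb.vpos a ∈ emb.region w.edgeSet (emb.vpos a) :=
    mem_region_self (mt (hsupport a).mp ha)
  have hconn := hw.2.2.resolve_left (Set.nonempty_iff_ne_empty.mp ⟨a, ha⟩)
  refine ⟨x, hx, fun b hb => hax ?_⟩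
  have hbw : b ∉ w.support := mt (hsupport b).mpr (notMem_trace_of_mem_region hb)
  have hab : emb.vpos b ∈ emb.region w.edgeSet (emb.vpos a) :=
    vpos_mem_region_of_mem_reachSet (S := {c | c ∉ w.support}) (fun c => mt (hsupport c).mp)
      haa (mem_reachSet_singleton_iff.mpr ⟨ha, hbw, hconn.preconnected _ _⟩)
  change emb.vpos a ∈ emb.region w.edgeSet x
  rw [region_eq hb, ← region_eq hab]
  exact haa

variable (emb) in
theorem exists_isFace_of_isPeripheral [Finite V] {w : G.Walk v v} (hw : IsPeripheral G w) :
    ∃ F, emb.IsFace F ∧ emb.boundaryEdges F = w.edgeSet := by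
  obtain ⟨x, hx, hvertex⟩ := exists_forall_vpos_notMem_region emb hw
  have hfacial : emb.IsFacialCycle w x := by
    refine ⟨hw.1, hx, Set.disjoint_left.mpr fun z hz hzi => ?_⟩
    rcases exists_vpos_mem_or_exists_arc hz hzi with ⟨a, ha⟩ | ⟨c, d, h, he, hc, hd, -⟩
    · exact hvertex a ha
    · rw [vpos_mem_trace_edgeSet hw.1.not_nil] at hc hd
      exact he (hw.2.1 c hc d hd h)
  exact ⟨_, ⟨x, hfacial.notMem_image, rfl⟩, hfacial.boundaryEdges_eq⟩

end PlanarEmbedding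

/-! ### Whitney's theorem -/

lemma IsPeripheral.map {V W : Type*} {G : SimpleGraph V} {H : SimpleGraph W} (α : G ≃g H) {v : V}
    {w : G.Walk v v} (hw : IsPeripheral G w) : IsPeripheral H (w.map α.toHom) := by
  obtain ⟨hcycle, hinduced, hconn⟩ := hw
  have hsupport (a : V) : α a ∈ (w.map α.toHom).support ↔ a ∈ w.support := by
    simp [Walk.support_map]
  have hedges (a b : V) : s(α a, α b) ∈ (w.map α.toHom).edges ↔ s(a, b) ∈ w.edges := by
    rw [Walk.edges_map]
    exact List.mem_map_of_injective (Sym2.map.injective α.injective) (a := s(a, b))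
  refine ⟨hcycle.map α.injective, fun a ha b hb hab => ?_, ?_⟩
  · obtain ⟨a, rfl⟩ := α.surjective a
    obtain ⟨b, rfl⟩ := α.surjective b
    rw [hsupport] at ha hb
    exact (hedges a b).mpr (hinduced a ha b hb (α.map_adj_iff.mp hab))
  · have himage : α '' {a | a ∉ w.support} = {b | b ∉ (w.map α.toHom).support} := by
      simp_rw [← hsupport]
      exact Set.image_preimage_eq {b | b ∉ (w.map α.toHom).support} α.surjective
    refine hconn.imp (fun h => by rw [← himage, h, Set.image_empty]) fun h => ?_
    exact (α.induce (himage ▸ α.injective.injOn.bijOn_image)).connected_iff.mp h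

theorem whitney_automorphism_maps_faces_general {V W : Type*} [Finite V] {G : SimpleGraph V}
    {H : SimpleGraph W} (h3 : ThreeConnected G) (emb : PlanarEmbedding G)
    (emb' : PlanarEmbedding H) (α : G ≃g H) {F : Set (ℝ × ℝ)} (hF : emb.IsFace F) :
    ∃ F', emb'.IsFace F' ∧ emb'.boundaryEdges F' = Sym2.map α '' emb.boundaryEdges F := by
  have : Finite W := .of_equiv V α.toEquiv
  obtain ⟨v, w, hw, hwF⟩ := hF.exists_isPeripheral h3
  obtain ⟨F', hF', hwF'⟩ := emb'.exists_isFace_of_isPeripheral (hw.map α)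
  exact ⟨F', hF', by rw [hwF', hwF, Walk.edgeSet_map]; rfl⟩

/-- Whitney's theorem: if `G` is a finite 3-connected planar graph with two embeddings,
then every automorphism of `G` maps the boundary of each face (of the first embedding) to
the boundary of a face (of the second embedding). -/
theorem whitney_automorphism_maps_faces
    {V : Type*} [Fintype V] (G : SimpleGraph V) (h3 : ThreeConnected G)
    (emb₁ emb₂ : PlanarEmbedding G) (α : G ≃g G) :
    ∀ F : Set (ℝ × ℝ), emb₁.IsFace F → ∃ F' : Set (ℝ × ℝ),
      emb₂.IsFace F' ∧ emb₂.boundaryEdges F' = Sym2.map ⇑α '' emb₁.boundaryEdges F :=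
  fun _ => whitney_automorphism_maps_faces_general h3 emb₁ emb₂ α
end
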